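/- Let f ∈ ℂ[x,y,z,w] be a reduced homogeneous polynomial of degree d defining a surface D: f = 0 in P³, tame with respect to the pair ρ1, ρ2 of degrees e1 ≤ e2, set e3 = d − 1 − e1 − e2, assume e3 ≥ e2 and that D is NOT free. Assume moreover the singular locus Σ of D is 1-dimensional, i.e., m(f)_k = a·k + b for all sufficiently large k, with deg Σ = a. Set s1 = e1 + e2 + e3 and s2 = e1e2 + e1e3 + e2e3. Then: (i) deg Σ ≤ s1² − s2 − 1; (ii) if D is nearly free with exponents e1, e2, e3+1, then deg Σ = s1² − s2 − 1; (iii) conversely, if deg Σ = s1² − s2 − 1 and AR(f) is generated as an S-module by ρ1, ρ2 and two further homogeneous syzygies ρ3, ρ4, then D is nearly free with exponents e1, e2, e3+1. -/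

import Mathlib

open MvPolynomial Matrix

noncomputable section

/-- The polynomial ring `S = ℂ[x,y,z,w]`. -/
abbrev S4 : Type := MvPolynomial (Fin 4) ℂ

/-- The `S`-linear map sending `ρ = (α,β,γ,δ)` to `α fₓ + β f_y + γ f_z + δ f_w`. -/
def jacPair (f : S4) : (Fin 4 → S4) →ₗ[S4] S4 where
  toFun ρ := ∑ i, ρ i * pderiv i f
  map_add' a b := by simp [add_mul, Finset.sum_add_distrib]
  map_smul' c a := by simp [Finset.mul_sum, mul_assoc]

/-- `AR(f)`: the `S`-module of all Jacobian syzygies of `f`. -/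
def AR4 (f : S4) : Submodule S4 (Fin 4 → S4) := LinearMap.ker (jacPair f)

/-- A vector of polynomials is homogeneous of degree `q` if each component is. -/
def VecHomog (ρ : Fin 4 → S4) (q : ℕ) : Prop := ∀ i, (ρ i).IsHomogeneous q

/-- `AR(f)_k`, the degree-`k` homogeneous part of `AR(f)`, as a `ℂ`-subspace. -/
def ARgr (f : S4) (k : ℕ) : Submodule ℂ (Fin 4 → S4) :=
  (AR4 f).restrictScalars ℂ ⊓ Submodule.pi Set.univ (fun _ => homogeneousSubmodule (Fin 4) ℂ k)

/-- `ar(f)_k = dim_ℂ AR(f)_k`. -/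
def arDim (f : S4) (k : ℕ) : ℕ := Module.finrank ℂ (ARgr f k)

/-- `ar(f)_q` for an integer index, with the convention that it vanishes for `q < 0`. -/
def arZ (f : S4) (q : ℤ) : ℕ := if 0 ≤ q then arDim f q.toNat else 0

/-- The Jacobian ideal of `f`. -/
def JacIdeal (f : S4) : Ideal S4 := Ideal.span (Set.range fun i : Fin 4 => pderiv i f)

/-- `m(f)_k = dim_ℂ M(f)_k`, the dimension of the degree-`k` part of the Milnor algebra. -/
def milnor4 (f : S4) (k : ℕ) : ℕ :=
  Module.finrank ℂ ((homogeneousSubmodule (Fin 4) ℂ k).map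
    (Submodule.mkQ ((JacIdeal f).restrictScalars ℂ)))

/-- `binom(m,3)` with the convention that it is `0` for `m < 3`. -/
def binom3 (m : ℤ) : ℕ := m.toNat.choose 3

/-- All four `3×3` minors of the `3×4` matrix with rows `ρ1, ρ2, ρ` vanish. -/
def MinorsVanish3 (ρ1 ρ2 ρ : Fin 4 → S4) : Prop :=
  ∀ j : Fin 4,
    (Matrix.of fun i k => ![ρ1, ρ2, ρ] i (j.succAbove k) : Matrix (Fin 3) (Fin 3) S4).det = 0

/-- `D : f = 0` is tame with respect to `ρ1, ρ2`: every homogeneous syzygy `ρ` for which all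
`3×3` minors of the matrix with rows `ρ1, ρ2, ρ` vanish lies in `S·ρ1 + S·ρ2`. -/
def TamePair (f : S4) (ρ1 ρ2 : Fin 4 → S4) : Prop :=
  ∀ ρ ∈ AR4 f, ∀ q : ℕ, VecHomog ρ q → MinorsVanish3 ρ1 ρ2 ρ →
    ∃ a b : S4, ρ = a • ρ1 + b • ρ2

/-- `ρ1` is a nonzero homogeneous syzygy of minimal degree `e1`, and `ρ2` is a homogeneous
syzygy of minimal degree `e2 ≥ e1` among the homogeneous syzygies not in `S·ρ1`. -/
def MinimalPair (f : S4) (ρ1 ρ2 : Fin 4 → S4) (e1 e2 : ℕ) : Prop :=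
  ρ1 ∈ AR4 f ∧ ρ1 ≠ 0 ∧ VecHomog ρ1 e1 ∧
  (∀ ρ ∈ AR4 f, ∀ q : ℕ, ρ ≠ 0 → VecHomog ρ q → e1 ≤ q) ∧
  ρ2 ∈ AR4 f ∧ VecHomog ρ2 e2 ∧ e1 ≤ e2 ∧ (∀ a : S4, ρ2 ≠ a • ρ1) ∧
  (∀ ρ ∈ AR4 f, ∀ q : ℕ, VecHomog ρ q → (∀ a : S4, ρ ≠ a • ρ1) → e2 ≤ q)

/-- `D : f = 0` is a free surface with exponents `d1 ≤ d2 ≤ d3`: `AR(f)` is a free graded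
`S`-module with a homogeneous basis of degrees `d1, d2, d3`. -/
def IsFreeWith (f : S4) (d1 d2 d3 : ℕ) : Prop :=
  d1 ≤ d2 ∧ d2 ≤ d3 ∧
  ∃ ρ1 ρ2 ρ3 : Fin 4 → S4,
    ρ1 ∈ AR4 f ∧ ρ2 ∈ AR4 f ∧ ρ3 ∈ AR4 f ∧
    VecHomog ρ1 d1 ∧ VecHomog ρ2 d2 ∧ VecHomog ρ3 d3 ∧
    (∀ ρ ∈ AR4 f, ∃ a b c : S4, ρ = a • ρ1 + b • ρ2 + c • ρ3) ∧
    (∀ a b c : S4, a • ρ1 + b • ρ2 + c • ρ3 = 0 → a = 0 ∧ b = 0 ∧ c = 0)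

/-- `D : f = 0` is a nearly free surface with exponents `d1 ≤ d2 ≤ d3` (`d4 = d3`):
`AR(f)` is generated by four homogeneous syzygies of degrees `d1, d2, d3, d3`,
with `d3 = d - (d1 + d2)`, whose module of relations is generated by a single relation
`a₁ρ₁ + a₂ρ₂ + a₃ρ₃ + a₄ρ₄ = 0` with `a₁, a₂, a₃, a₄` homogeneous of degrees
`d3-d1+1, d3-d2+1, 1, 1`. -/
def IsNearlyFreeWith (f : S4) (d d1 d2 d3 : ℕ) : Prop :=
  d1 ≤ d2 ∧ d2 ≤ d3 ∧ d1 + d2 + d3 = d ∧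
  ∃ (ρ : Fin 4 → Fin 4 → S4) (a : Fin 4 → S4),
    (∀ i, ρ i ∈ AR4 f) ∧
    VecHomog (ρ 0) d1 ∧ VecHomog (ρ 1) d2 ∧ VecHomog (ρ 2) d3 ∧ VecHomog (ρ 3) d3 ∧
    (∀ σ ∈ AR4 f, ∃ b : Fin 4 → S4, σ = ∑ i, b i • ρ i) ∧
    (a 0).IsHomogeneous (d3 - d1 + 1) ∧ (a 1).IsHomogeneous (d3 - d2 + 1) ∧
    (a 2).IsHomogeneous 1 ∧ (a 3).IsHomogeneous 1 ∧
    a ≠ 0 ∧ (∑ i, a i • ρ i) = 0 ∧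
    (∀ b : Fin 4 → S4, (∑ i, b i • ρ i) = 0 → ∃ c : S4, b = c • a)

/-- `D : f = 0` is tame: it is tame with respect to some pair `ρ1, ρ2` chosen as in the paper. -/
def IsTame (f : S4) : Prop :=
  ∃ (ρ1 ρ2 : Fin 4 → S4) (e1 e2 : ℕ), MinimalPair f ρ1 ρ2 e1 e2 ∧ TamePair f ρ1 ρ2

/-- The `4×4` matrix with rows the Euler vector field `(x,y,z,w)` and `ρ1, ρ2, ρ`. -/
def EMat (ρ1 ρ2 ρ : Fin 4 → S4) : Matrix (Fin 4) (Fin 4) S4 :=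
  Matrix.of ![fun i => X i, ρ1, ρ2, ρ]

/-- Degree-`k` homogeneous polynomials. -/
abbrev Hk (k : ℕ) : Submodule ℂ S4 := homogeneousSubmodule (Fin 4) ℂ k

instance Hk_fd (k : ℕ) : FiniteDimensional ℂ (Hk k) :=
  Module.Finite.iff_fg.mpr (homogeneousSubmodule_fg _ _ k)

lemma finrank_Hk (k : ℕ) : Module.finrank ℂ (Hk k) = (k + 3).choose 3 := by
  have h1 : Hk k = AddMonoidAlgebra.supported ℂ ℂ {d : Fin 4 →₀ ℕ | d.degree = k} :=
    homogeneousSubmodule_eq_finsupp_supported _ _ k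
  have h2 : {d : Fin 4 →₀ ℕ | d.degree = k} = ↑(Finset.finsuppAntidiag (Finset.univ : Finset (Fin 4)) k) := by
    ext d
    simp [Finsupp.degree_eq_sum]
  rw [h1, (AddMonoidAlgebra.supportedEquivFinsupp _).finrank_eq]
  rw [h2]
  simp [Module.finrank_finsupp_self]
  rw [Finset.card_finsuppAntidiag_nat_eq_choose]
  simp [Nat.choose_symm_add, add_comm]
  exact Nat.choose_symm_of_eq_add (by omega)

lemma choose3 (k : ℕ) : ((k + 3).choose 3 : ℚ) = (k + 1) * (k + 2) * (k + 3) / 6 := by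
  induction k with
  | zero => norm_num
  | succ n ih =>
    have h2 : ∀ n : ℕ, ((n + 2).choose 2 : ℚ) = (n + 1) * (n + 2) / 2 := by
      intro n
      induction n with
      | zero => norm_num
      | succ m ihm =>
        rw [show m + 1 + 2 = (m + 2) + 1 by ring, Nat.choose_succ_succ]
        push_cast
        rw [ihm]; simp; ring
    rw [show n + 1 + 3 = (n + 3) + 1 by ring, Nat.choose_succ_succ]
    push_cast
    rw [ih, show n + 3 = (n + 1) + 2 by ring, h2]
    push_cast
    ring

/-- Hilbert function of `S`, rational valued. -/
def sQ (k : ℕ) : ℚ := ((k : ℚ) + 1) * (k + 2) * (k + 3) / 6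

lemma finrank_HkQ (k : ℕ) : (Module.finrank ℂ (Hk k) : ℚ) = sQ k := by
  rw [finrank_Hk, choose3, sQ]

lemma rank_null {V W : Type*} [AddCommGroup V] [Module ℂ V] [AddCommGroup W] [Module ℂ W]
    (P : Submodule ℂ V) [FiniteDimensional ℂ P] (g : V →ₗ[ℂ] W) :
    Module.finrank ℂ (P.map g) + Module.finrank ℂ (P ⊓ LinearMap.ker g : Submodule ℂ V)
      = Module.finrank ℂ P := by
  have h := LinearMap.finrank_range_add_finrank_ker (g.domRestrict P)
  rw [LinearMap.range_domRestrict] at h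
  rw [← h]
  congr 1
  have : LinearMap.ker (g.domRestrict P) = (P ⊓ LinearMap.ker g).comap P.subtype := by
    ext x; simp
  rw [this]
  exact ((Submodule.comapSubtypeEquivOfLe (inf_le_left : P ⊓ LinearMap.ker g ≤ P)).finrank_eq).symm

/-- Free graded piece. -/
def Pk {n : ℕ} (δ : Fin n → ℕ) : Submodule ℂ (Fin n → S4) :=
  Submodule.pi Set.univ (fun i => Hk (δ i))

lemma mem_Pk {n : ℕ} (δ : Fin n → ℕ) (v) : v ∈ Pk δ ↔ ∀ i, (v i).IsHomogeneous (δ i) := by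
  simp [Pk, Submodule.mem_pi]

/-- equivalence with the product -/
def Pk_equiv {n : ℕ} (δ : Fin n → ℕ) : Pk δ ≃ₗ[ℂ] (∀ i, Hk (δ i)) where
  toFun v i := ⟨v.1 i, (mem_Pk δ v.1).1 v.2 i⟩
  invFun w := ⟨fun i => (w i).1, (mem_Pk δ _).2 fun i => (w i).2⟩
  map_add' _ _ := rfl
  map_smul' _ _ := rfl
  left_inv _ := rfl
  right_inv _ := rfl

instance Pk_fd {n : ℕ} (δ : Fin n → ℕ) : FiniteDimensional ℂ (Pk δ) :=
  Module.Finite.equiv (Pk_equiv δ).symm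

lemma finrank_Pk {n : ℕ} (δ : Fin n → ℕ) :
    (Module.finrank ℂ (Pk δ) : ℚ) = ∑ i, sQ (δ i) := by
  rw [(Pk_equiv δ).finrank_eq, Module.finrank_pi_fintype]
  push_cast
  simp_rw [finrank_HkQ]

lemma hc_mul {p q : S4} {m n : ℕ} (hq : q.IsHomogeneous n) :
    homogeneousComponent (m + n) (p * q) = homogeneousComponent m p * q := by
  classical
  conv_lhs => rw [← sum_homogeneousComponent p, Finset.sum_mul, map_sum]
  have : ∀ i, homogeneousComponent (m + n) (homogeneousComponent i p * q)
      = if i = m then homogeneousComponent m p * q else 0 := by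
    intro i
    have h := (homogeneousComponent_isHomogeneous i p).mul hq
    rw [homogeneousComponent_of_mem h]
    by_cases hi : i = m
    · subst hi; simp
    · rw [if_neg hi, if_neg (by omega)]
  simp_rw [this]
  rw [Finset.sum_ite_eq']
  split_ifs with h
  · rfl
  · rw [homogeneousComponent_eq_zero, zero_mul]
    simp at h; omega

lemma hc_mul' {p q : S4} {k m n : ℕ} (hq : q.IsHomogeneous n) (hk : m + n = k) :
    homogeneousComponent k (p * q) = homogeneousComponent m p * q := by
  rw [← hk, hc_mul hq]

lemma hom_of_mul {p q : S4} {k m n : ℕ} (hq : q.IsHomogeneous n) (hq0 : q ≠ 0) (hk : m + n = k)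
    (h : (p * q).IsHomogeneous k) : p.IsHomogeneous m := by
  have h1 := hc_mul' (p := p) hq hk
  rw [homogeneousComponent_eq_self h] at h1
  rw [mul_right_cancel₀ hq0 h1]
  exact homogeneousComponent_isHomogeneous _ _

/-- if the degree of the product is too small the factor vanishes -/
lemma zero_of_mul {p q : S4} {k n : ℕ} (hq : q.IsHomogeneous n) (hq0 : q ≠ 0) (hk : k < n)
    (h : (p * q).IsHomogeneous k) : p = 0 := by
  by_contra hp
  have h0 := mul_ne_zero hp hq0
  have h1 := h.totalDegree h0
  rw [totalDegree_mul_of_isDomain hp hq0, hq.totalDegree hq0] at h1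
  omega

lemma mem_AR4 (f : S4) (ρ : Fin 4 → S4) : ρ ∈ AR4 f ↔ ∑ i, ρ i * pderiv i f = 0 := by
  simp [AR4, jacPair]

lemma mem_ARgr (f : S4) (k : ℕ) (ρ : Fin 4 → S4) : ρ ∈ ARgr f k ↔ ρ ∈ AR4 f ∧ VecHomog ρ k := by
  simp [ARgr, VecHomog, Submodule.mem_pi]

/-- A polynomial dividing all of its own partials is constant. -/
lemma pderiv_zero_of_dvd {p : S4} (i : Fin 4) (h : p ∣ pderiv i p) : pderiv i p = 0 := by
  by_contra h0
  obtain ⟨c, hc⟩ := h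
  have hp : p ≠ 0 := by rintro rfl; simp at h0
  have hc0 : c ≠ 0 := by rintro rfl; simp [hc] at h0
  have h1 : degreeOf i (pderiv i p) = degreeOf i p + degreeOf i c := by
    rw [hc, degreeOf_mul_eq hp hc0]
  have h2 : degreeOf i (pderiv i p) < degreeOf i p := by
    have key : ∀ m ∈ (pderiv i p).support, m i + 1 ≤ degreeOf i p := by
      intro m hm
      rw [mem_support_iff, coeff_pderiv] at hm
      have : m + Finsupp.single i 1 ∈ p.support := by
        rw [mem_support_iff]; intro h; simp [h] at hm
      have := monomial_le_degreeOf i this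
      simpa using this
    have hne : (pderiv i p).support.Nonempty := support_nonempty.2 h0
    obtain ⟨m0, hm0⟩ := hne
    have hpos : 0 < degreeOf i p := by have := key m0 hm0; omega
    rw [degreeOf_lt_iff hpos]
    intro m hm
    have := key m hm
    omega
  omega

lemma isUnit_of_pderiv {p : S4} (hp : p ≠ 0) (h : ∀ i, pderiv i p = 0) : IsUnit p := by
  have : p = C (coeff 0 p) := by
    ext m
    by_cases hm : m = 0
    · subst hm; simp
    · rw [coeff_C, if_neg (Ne.symm hm)]
      obtain ⟨i, hi⟩ := Finsupp.ne_iff.1 hm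
      have h1 := congrArg (coeff (m - Finsupp.single i 1)) (h i)
      rw [coeff_pderiv] at h1
      have h2 : m - Finsupp.single i 1 + Finsupp.single i 1 = m := by
        apply tsub_add_cancel_of_le
        rw [Finsupp.single_le_iff]
        simp at hi; omega
      rw [h2] at h1
      simp only [coeff_zero, mul_eq_zero] at h1
      rcases h1 with h1 | h1
      · exact h1
      · exact absurd h1 (Nat.cast_add_one_ne_zero _)
  rw [this] at hp ⊢
  exact (isUnit_iff_ne_zero.2 (fun h => hp (by rw [h, C_0]))).map C

lemma exists_pderiv_not_dvd {f p : S4} (hf : Squarefree f) (hp : Irreducible p) (hpf : p ∣ f) :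
    ∃ i, ¬ p ∣ pderiv i f := by
  by_contra! H
  obtain ⟨u, rfl⟩ := hpf
  have hpr := hp.prime
  have hu : ¬ p ∣ u := by
    rintro ⟨v, rfl⟩
    exact hp.not_isUnit (hf p ⟨v, by ring⟩)
  refine hp.not_isUnit (isUnit_of_pderiv hp.ne_zero fun i => pderiv_zero_of_dvd i ?_)
  have h1 := H i
  rw [pderiv_mul] at h1
  have h2 : p ∣ pderiv i p * u := (dvd_add_left (dvd_mul_right p _)).1 h1
  exact (hpr.dvd_or_dvd h2).resolve_right hu

lemma squarefree_dvd {x y : S4} (hx : Squarefree x) (h : ∀ p, Irreducible p → p ∣ x → p ∣ y) :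
    x ∣ y := by
  induction x using UniqueFactorizationMonoid.induction_on_prime with
  | h₁ => exact absurd hx (by simp)
  | h₂ x hu => exact hu.dvd
  | h₃ a p ha hp ih =>
    have h1 : a ∣ y := ih (hx.squarefree_of_dvd (dvd_mul_left _ _))
      (fun q hq hqa => h q hq (dvd_mul_of_dvd_right hqa _))
    obtain ⟨z, rfl⟩ := h1
    have h2 := h p hp.irreducible (dvd_mul_right _ _)
    rcases hp.dvd_or_dvd h2 with h3 | h3
    · obtain ⟨v, rfl⟩ := h3
      exact absurd (hx p ⟨v, by ring⟩) hp.not_isUnit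
    · rw [mul_comm p a]; exact mul_dvd_mul_left a h3

lemma dvd_of_dvd_mul_pderiv {f D : S4} (hf : Squarefree f) (h : ∀ i, f ∣ D * pderiv i f) :
    f ∣ D := by
  refine squarefree_dvd hf fun p hp hpf => ?_
  obtain ⟨i, hi⟩ := exists_pderiv_not_dvd hf hp hpf
  exact (hp.prime.dvd_or_dvd (hpf.trans (h i))).resolve_right hi

/-- The determinant `det(E, ρ1, ρ2, ρ)` as a linear function of `ρ`. -/
def detL (ρ1 ρ2 : Fin 4 → S4) : (Fin 4 → S4) →ₗ[S4] S4 :=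
  (detRowAlternating (n := Fin 4) (R := S4)).toMultilinearMap.toLinearMap
    ![fun i => X i, ρ1, ρ2, 0] 3

lemma detL_apply (ρ1 ρ2 ρ : Fin 4 → S4) : detL ρ1 ρ2 ρ = (EMat ρ1 ρ2 ρ).det := by
  have : (Function.update ![fun i => X i, ρ1, ρ2, 0] 3 ρ : Fin 4 → Fin 4 → S4)
      = ![fun i => X i, ρ1, ρ2, ρ] := by
    ext i : 1
    fin_cases i <;> simp [Function.update]
  simp only [detL, MultilinearMap.toLinearMap_apply, this]
  rfl

lemma detL_self (ρ1 ρ2 : Fin 4 → S4) (a b : S4) : detL ρ1 ρ2 (a • ρ1 + b • ρ2) = 0 := by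
  rw [map_add, map_smul, map_smul, detL_apply, detL_apply,
    Matrix.det_zero_of_row_eq (i := 1) (j := 3) (by decide) (by rfl),
    Matrix.det_zero_of_row_eq (i := 2) (j := 3) (by decide) (by rfl)]
  simp

lemma detL_homog {ρ1 ρ2 ρ : Fin 4 → S4} {e1 e2 q : ℕ} (h1 : VecHomog ρ1 e1) (h2 : VecHomog ρ2 e2)
    (h : VecHomog ρ q) : (detL ρ1 ρ2 ρ).IsHomogeneous (1 + e1 + e2 + q) := by
  rw [detL_apply, Matrix.det_apply]
  refine IsHomogeneous.sum _ _ _ fun σ _ => ?_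
  have hM : ∀ i j, (EMat ρ1 ρ2 ρ i j).IsHomogeneous (![1, e1, e2, q] i) := by
    intro i j
    fin_cases i
    · exact isHomogeneous_X _ _
    · exact h1 j
    · exact h2 j
    · exact h j
  have hp := IsHomogeneous.prod Finset.univ (fun i => EMat ρ1 ρ2 ρ (σ i) i) (fun i => ![1, e1, e2, q] (σ i))
    (fun i _ => hM _ _)
  rw [Equiv.sum_comp σ, Fin.sum_univ_four] at hp
  rcases Int.units_eq_one_or (Equiv.Perm.sign σ) with h | h <;> rw [h]
  · simpa using hp
  · simpa using hp.neg


lemma cramer_rel {f : S4} {d : ℕ} (hf : f.IsHomogeneous d)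
    {ρ1 ρ2 ρ : Fin 4 → S4} (h1 : ρ1 ∈ AR4 f) (h2 : ρ2 ∈ AR4 f) (h : ρ ∈ AR4 f)
    (j : Fin 4) : (EMat ρ1 ρ2 ρ).adjugate j 0 * ((d : S4) * f) = detL ρ1 ρ2 ρ * pderiv j f := by
  rw [mem_AR4] at h1 h2 h
  have hM : EMat ρ1 ρ2 ρ *ᵥ (fun i => pderiv i f) = ![(d : S4) * f, 0, 0, 0] := by
    ext1 i
    fin_cases i
    · have := hf.sum_X_mul_pderiv
      rw [nsmul_eq_mul] at this
      exact this
    · exact h1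
    · exact h2
    · exact h
  have h3 := congrArg (fun v => (EMat ρ1 ρ2 ρ).adjugate *ᵥ v) hM
  simp only [Matrix.mulVec_mulVec, Matrix.adjugate_mul, Matrix.smul_mulVec, Matrix.one_mulVec] at h3
  have h4 := congrFun h3 j
  rw [detL_apply]
  simp [Matrix.mulVec, dotProduct, Fin.sum_univ_four] at h4
  exact h4.symm

lemma d_ne {d : ℕ} (hd : 1 ≤ d) : (d : S4) ≠ 0 := by
  exact_mod_cast (show d ≠ 0 by omega)

lemma exists_pderiv_ne {f : S4} {d : ℕ} (hd : 1 ≤ d) (hf : f.IsHomogeneous d) (hred : Squarefree f)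
    : ∃ i, pderiv i f ≠ 0 := by
  by_contra! H
  have := hf.sum_X_mul_pderiv
  simp only [H, mul_zero, Finset.sum_const_zero, nsmul_eq_mul] at this
  exact (mul_ne_zero (d_ne hd) hred.ne_zero) this.symm

lemma f_dvd_detL {f : S4} {d : ℕ} (hd : 1 ≤ d) (hf : f.IsHomogeneous d) (hred : Squarefree f)
    {ρ1 ρ2 ρ : Fin 4 → S4} (h1 : ρ1 ∈ AR4 f) (h2 : ρ2 ∈ AR4 f) (h : ρ ∈ AR4 f) :
    f ∣ detL ρ1 ρ2 ρ :=
  dvd_of_dvd_mul_pderiv hred fun i => ⟨(EMat ρ1 ρ2 ρ).adjugate i 0 * d, by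
    rw [← cramer_rel hf h1 h2 h]; ring⟩

lemma minors_of_detL {f : S4} {d : ℕ} (hd : 1 ≤ d) (hf : f.IsHomogeneous d) (hred : Squarefree f)
    {ρ1 ρ2 ρ : Fin 4 → S4} (h1 : ρ1 ∈ AR4 f) (h2 : ρ2 ∈ AR4 f) (h : ρ ∈ AR4 f)
    (h0 : detL ρ1 ρ2 ρ = 0) : MinorsVanish3 ρ1 ρ2 ρ := by
  intro j
  have h3 := cramer_rel hf h1 h2 h j
  rw [h0, zero_mul] at h3
  have h4 := (mul_eq_zero.1 h3).resolve_right (mul_ne_zero (d_ne hd) hred.ne_zero)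
  rw [Matrix.adjugate_fin_succ_eq_det_submatrix] at h4
  have h5 := (mul_eq_zero.1 h4).resolve_left (pow_ne_zero _ (by simp))
  rw [← h5]
  congr 1

lemma milnor_count {f : S4} {d s : ℕ} (hf : f.IsHomogeneous d) (hs : s + 1 = d) (K : ℕ) :
    (milnor4 f (K + s) : ℚ) + 4 * sQ K = sQ (K + s) + arDim f K := by
  have h1 := rank_null (Hk (K + s)) (Submodule.mkQ ((JacIdeal f).restrictScalars ℂ))
  have h2 := rank_null (Pk (fun _ : Fin 4 => K)) ((jacPair f).restrictScalars ℂ)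
  have h3 : Pk (fun _ : Fin 4 => K) ⊓ LinearMap.ker ((jacPair f).restrictScalars ℂ) = ARgr f K := by
    ext ρ
    rw [mem_ARgr, Submodule.mem_inf, mem_Pk, and_comm]
    rfl
  have hpd : ∀ i, (pderiv i f).IsHomogeneous s := fun i => by
    have := hf.pderiv (i := i)
    rwa [← hs, Nat.add_sub_cancel] at this
  have h4 : (Pk (fun _ : Fin 4 => K)).map ((jacPair f).restrictScalars ℂ)
      = Hk (K + s) ⊓ LinearMap.ker (Submodule.mkQ ((JacIdeal f).restrictScalars ℂ)) := by
    rw [Submodule.ker_mkQ]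
    ext p
    simp only [Submodule.mem_map, Submodule.mem_inf, mem_Pk, Submodule.restrictScalars_mem,
      LinearMap.coe_restrictScalars, mem_homogeneousSubmodule]
    constructor
    · rintro ⟨v, hv, rfl⟩
      refine ⟨IsHomogeneous.sum _ _ _ fun i _ => (hv i).mul (hpd i), ?_⟩
      change ∑ i, v i * pderiv i f ∈ JacIdeal f
      exact Ideal.sum_mem (JacIdeal f) fun i _ =>
        Ideal.mul_mem_left (JacIdeal f) _ (Ideal.subset_span (Set.mem_range_self i))
    · rintro ⟨hp, hJ⟩
      rw [JacIdeal, Ideal.mem_span_range_iff_exists_fun] at hJ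
      obtain ⟨c, rfl⟩ := hJ
      refine ⟨fun i => homogeneousComponent K (c i),
        fun i => homogeneousComponent_isHomogeneous _ _, ?_⟩
      rw [← homogeneousComponent_eq_self hp, map_sum]
      change ∑ i, homogeneousComponent K (c i) * pderiv i f = _
      exact Finset.sum_congr rfl fun i _ => (hc_mul (hpd i)).symm
  rw [h3, h4] at h2
  have h1' := congrArg (Nat.cast (R := ℚ)) h1
  push_cast at h1'
  have h2' := congrArg (Nat.cast (R := ℚ)) h2
  push_cast at h2'
  rw [finrank_Pk] at h2'
  rw [finrank_HkQ] at h1'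
  simp only [Finset.sum_const, Finset.card_univ, Fintype.card_fin] at h2'
  rw [arDim, milnor4]
  simp only [nsmul_eq_mul] at h2'
  push_cast at h2'
  linarith

/-- The running hypotheses. -/
structure Setup (f : S4) (d e1 e2 e3 : ℕ) (ρ1 ρ2 : Fin 4 → S4) : Prop where
  hd : 1 ≤ d
  hf : f.IsHomogeneous d
  hred : Squarefree f
  hmin : MinimalPair f ρ1 ρ2 e1 e2
  htame : TamePair f ρ1 ρ2
  he3 : e1 + e2 + e3 + 1 = d
  he23 : e2 ≤ e3

namespace Setup
variable {f : S4} {d e1 e2 e3 : ℕ} {ρ1 ρ2 : Fin 4 → S4}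

lemma h1 (H : Setup f d e1 e2 e3 ρ1 ρ2) : ρ1 ∈ AR4 f := H.hmin.1
lemma h2 (H : Setup f d e1 e2 e3 ρ1 ρ2) : ρ2 ∈ AR4 f := H.hmin.2.2.2.2.1
lemma v1 (H : Setup f d e1 e2 e3 ρ1 ρ2) : VecHomog ρ1 e1 := H.hmin.2.2.1
lemma v2 (H : Setup f d e1 e2 e3 ρ1 ρ2) : VecHomog ρ2 e2 := H.hmin.2.2.2.2.2.1
lemma he12 (H : Setup f d e1 e2 e3 ρ1 ρ2) : e1 ≤ e2 := H.hmin.2.2.2.2.2.2.1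

lemma indep (H : Setup f d e1 e2 e3 ρ1 ρ2) (a b : S4) (h : a • ρ1 + b • ρ2 = 0) :
    a = 0 ∧ b = 0 := by
  have hn := H.hmin.2.2.2.2.2.2.2.1
  by_contra hab
  have ha : a ≠ 0 := by
    rintro rfl
    have hb : b ≠ 0 := by tauto
    simp only [zero_smul, zero_add, smul_eq_zero, hb, false_or] at h
    exact hn 0 (by simp [h])
  have hall : ∀ ρ ∈ AR4 f, ∀ q, VecHomog ρ q → ∃ c : S4, a • ρ = c • ρ2 := by
    intro ρ hρ q hq
    obtain ⟨u, v, huv⟩ := H.htame ρ hρ q hq (by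
      intro j
      refine Matrix.exists_vecMul_eq_zero_iff.1 ⟨![a, b, 0], fun h0 => ha (congrFun h0 0), ?_⟩
      ext1 k
      have := congrFun h (j.succAbove k)
      simpa [Matrix.vecMul, dotProduct, Fin.sum_univ_three] using this)
    refine ⟨a * v - u * b, ?_⟩
    have h' : a • ρ1 = - (b • ρ2) := eq_neg_of_add_eq_zero_left h
    rw [huv, smul_add, smul_comm a u, h']
    module
  obtain ⟨i, hi⟩ := exists_pderiv_ne H.hd H.hf H.hred
  let κ : Fin 4 → Fin 4 → S4 := fun j => Pi.single j (pderiv i f) - Pi.single i (pderiv j f)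
  have hκ : ∀ j, ∃ c : S4, a • κ j = c • ρ2 := by
    intro j
    have hp : ∀ j, (pderiv j f).IsHomogeneous (d - 1) := fun j => H.hf.pderiv
    refine hall _ ?_ (d - 1) ?_
    · rw [mem_AR4]
      simp [κ, sub_mul, Finset.sum_sub_distrib, Pi.single_apply]
      ring
    · intro l
      refine IsHomogeneous.sub ?_ ?_ <;> rw [Pi.single_apply] <;> split_ifs <;>
        first | exact hp _ | exact isHomogeneous_zero _ _ _
  obtain ⟨j, k, hij, hik, hjk⟩ : ∃ j k : Fin 4, i ≠ j ∧ i ≠ k ∧ j ≠ k := by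
    fin_cases i <;> decide
  obtain ⟨c1, hc1⟩ := hκ j
  obtain ⟨c2, hc2⟩ := hκ k
  have hjj : κ j j = pderiv i f := by simp [κ, hij.symm]
  have hkj : κ k j = 0 := by simp [κ, hjk, hij.symm]
  have hkk : κ k k = pderiv i f := by simp [κ, hik.symm]
  have e1 := congrFun hc1 j
  have e2 := congrFun hc2 j
  have e3 := congrFun hc2 k
  simp only [Pi.smul_apply, smul_eq_mul, hjj, hkj, hkk, mul_zero] at e1 e2 e3
  have hc20 : c2 = 0 := by
    rcases mul_eq_zero.1 e2.symm with h | h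
    · exact h
    · rw [h, mul_zero] at e1
      exact absurd e1 (mul_ne_zero ha hi)
  rw [hc20, zero_mul] at e3
  exact mul_ne_zero ha hi e3

/-- The ideal `I ≅ AR(f)/(Sρ1+Sρ2)`. -/
def II (f : S4) (ρ1 ρ2 : Fin 4 → S4) : Ideal S4 :=
  Submodule.comap (LinearMap.lsmul S4 S4 f) (Submodule.map (detL ρ1 ρ2) (AR4 f))

lemma mem_II (f : S4) (ρ1 ρ2 : Fin 4 → S4) (p : S4) :
    p ∈ II f ρ1 ρ2 ↔ ∃ ρ ∈ AR4 f, detL ρ1 ρ2 ρ = f * p := by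
  simp [II]

/-- graded pieces of `II` -/
def Ik (f : S4) (ρ1 ρ2 : Fin 4 → S4) (e3 k : ℕ) : Submodule ℂ S4 :=
  Submodule.comap ((LinearMap.lsmul S4 S4 f).restrictScalars ℂ)
    (Submodule.map ((detL ρ1 ρ2).restrictScalars ℂ) (ARgr f (k + e3)))

lemma mem_Ik (f : S4) (ρ1 ρ2 : Fin 4 → S4) (e3 k : ℕ) (p : S4) :
    p ∈ Ik f ρ1 ρ2 e3 k ↔ ∃ ρ, ρ ∈ AR4 f ∧ VecHomog ρ (k + e3) ∧ detL ρ1 ρ2 ρ = f * p := by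
  simp [Ik, mem_ARgr, and_assoc]

lemma Ik_le_II {k : ℕ} : ∀ p ∈ Ik f ρ1 ρ2 e3 k, p ∈ II f ρ1 ρ2 := by
  intro p hp
  rw [mem_Ik] at hp
  rw [mem_II]
  obtain ⟨ρ, h, -, h'⟩ := hp
  exact ⟨ρ, h, h'⟩

lemma homog_of_det (H : Setup f d e1 e2 e3 ρ1 ρ2) {ρ : Fin 4 → S4} {p : S4} {k : ℕ}
    (hρ : VecHomog ρ (k + e3)) (h : detL ρ1 ρ2 ρ = f * p) : p.IsHomogeneous k := by
  have h1 := detL_homog H.v1 H.v2 hρ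
  rw [h, mul_comm] at h1
  refine hom_of_mul H.hf H.hred.ne_zero ?_ h1
  have := H.he3
  omega

lemma zero_of_det (H : Setup f d e1 e2 e3 ρ1 ρ2) {ρ : Fin 4 → S4} {p : S4} {q : ℕ}
    (hρ : VecHomog ρ q) (hq : q < e3) (h : detL ρ1 ρ2 ρ = f * p) : p = 0 := by
  have h1 := detL_homog H.v1 H.v2 hρ
  rw [h, mul_comm] at h1
  refine zero_of_mul H.hf H.hred.ne_zero ?_ h1
  have := H.he3
  omega

lemma Ik_le (H : Setup f d e1 e2 e3 ρ1 ρ2) (k : ℕ) : Ik f ρ1 ρ2 e3 k ≤ Hk k := by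
  intro p hp
  rw [mem_Ik] at hp
  obtain ⟨ρ, h, h', h''⟩ := hp
  exact H.homog_of_det h' h''

lemma exists_p (H : Setup f d e1 e2 e3 ρ1 ρ2) {ρ : Fin 4 → S4} (h : ρ ∈ AR4 f) :
    ∃ p, detL ρ1 ρ2 ρ = f * p := f_dvd_detL H.hd H.hf H.hred H.h1 H.h2 h

/-- the kernel of the determinant, homogeneous version -/
lemma ker_det (H : Setup f d e1 e2 e3 ρ1 ρ2) {ρ : Fin 4 → S4} {q : ℕ} (h : ρ ∈ AR4 f)
    (hq : VecHomog ρ q) (h1q : e1 ≤ q) (h2q : e2 ≤ q)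
    (h0 : detL ρ1 ρ2 ρ = 0) : ∃ a b : S4, a.IsHomogeneous (q - e1) ∧ b.IsHomogeneous (q - e2) ∧
      ρ = a • ρ1 + b • ρ2 := by
  obtain ⟨a, b, hab⟩ := H.htame ρ h q hq (minors_of_detL H.hd H.hf H.hred H.h1 H.h2 h h0)
  refine ⟨homogeneousComponent (q - e1) a, homogeneousComponent (q - e2) b,
    homogeneousComponent_isHomogeneous _ _, homogeneousComponent_isHomogeneous _ _, ?_⟩
  ext1 i
  rw [← homogeneousComponent_eq_self (hq i), hab]
  simp only [Pi.add_apply, Pi.smul_apply, smul_eq_mul, map_add]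
  rw [hc_mul' (H.v1 i) (Nat.sub_add_cancel h1q), hc_mul' (H.v2 i) (Nat.sub_add_cancel h2q)]

/-- `(b_i) ↦ ∑ b_i τ_i` -/
def combL {n : ℕ} {M : Type*} [AddCommGroup M] [Module S4 M] (τ : Fin n → M) :
    (Fin n → S4) →ₗ[S4] M := Fintype.linearCombination S4 τ

lemma combL_apply {n : ℕ} {M : Type*} [AddCommGroup M] [Module S4 M] (τ : Fin n → M)
    (b : Fin n → S4) : combL τ b = ∑ i, b i • τ i := rfl

instance ARgr_fd (f : S4) (k : ℕ) : FiniteDimensional ℂ (ARgr f k) :=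
  Submodule.finiteDimensional_of_le (S₂ := Pk (fun _ : Fin 4 => k)) inf_le_right

lemma ar_count (H : Setup f d e1 e2 e3 ρ1 ρ2) (k : ℕ) :
    (arDim f (k + e3) : ℚ) = sQ (k + e3 - e1) + sQ (k + e3 - e2)
      + Module.finrank ℂ (Ik f ρ1 ρ2 e3 k) := by
  have he12 := H.he12
  have he23 := H.he23
  have c1 := rank_null (ARgr f (k + e3)) ((detL ρ1 ρ2).restrictScalars ℂ)
  have : FiniteDimensional ℂ (Ik f ρ1 ρ2 e3 k) := Submodule.finiteDimensional_of_le (H.Ik_le k)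
  have c2 := rank_null (Ik f ρ1 ρ2 e3 k) ((LinearMap.lsmul S4 S4 f).restrictScalars ℂ)
  have c3 := rank_null (Pk ![k + e3 - e1, k + e3 - e2]) ((combL ![ρ1, ρ2]).restrictScalars ℂ)
  have d1 : (Ik f ρ1 ρ2 e3 k).map ((LinearMap.lsmul S4 S4 f).restrictScalars ℂ)
      = (ARgr f (k + e3)).map ((detL ρ1 ρ2).restrictScalars ℂ) := by
    apply Submodule.map_comap_eq_of_le
    rintro _ ⟨ρ, hρ, rfl⟩
    obtain ⟨p, hp⟩ := H.exists_p ((mem_ARgr _ _ _).1 hρ).1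
    exact ⟨p, hp.symm⟩
  have d2 : Ik f ρ1 ρ2 e3 k ⊓ LinearMap.ker ((LinearMap.lsmul S4 S4 f).restrictScalars ℂ) = ⊥ := by
    rw [eq_bot_iff]
    rintro p ⟨-, hp⟩
    have hp : f * p = 0 := hp
    simpa [H.hred.ne_zero] using hp
  have d3 : (Pk ![k + e3 - e1, k + e3 - e2]).map ((combL ![ρ1, ρ2]).restrictScalars ℂ)
      = ARgr f (k + e3) ⊓ LinearMap.ker ((detL ρ1 ρ2).restrictScalars ℂ) := by
    ext ρ
    simp only [Submodule.mem_map, Submodule.mem_inf, mem_Pk, mem_ARgr,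
      LinearMap.coe_restrictScalars, LinearMap.mem_ker, combL_apply, Fin.sum_univ_two]
    constructor
    · rintro ⟨c, hc, rfl⟩
      simp only [Matrix.cons_val_zero, Matrix.cons_val_one]
      refine ⟨⟨(AR4 f).add_mem ((AR4 f).smul_mem _ H.h1) ((AR4 f).smul_mem _ H.h2), ?_⟩,
        detL_self _ _ _ _⟩
      intro i
      have t1 := (hc 0).mul (H.v1 i)
      have t2 := (hc 1).mul (H.v2 i)
      simp only [Matrix.cons_val_zero, Matrix.cons_val_one] at t1 t2
      rw [Nat.sub_add_cancel (by omega)] at t1 t2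
      exact t1.add t2
    · rintro ⟨⟨h, hq⟩, h0⟩
      obtain ⟨a, b, ha, hb, rfl⟩ := H.ker_det h hq (by omega) (by omega) h0
      refine ⟨![a, b], ?_, rfl⟩
      intro i
      fin_cases i
      · exact ha
      · exact hb
  have d4 : Pk ![k + e3 - e1, k + e3 - e2] ⊓ LinearMap.ker ((combL ![ρ1, ρ2]).restrictScalars ℂ)
      = ⊥ := by
    rw [eq_bot_iff]
    rintro c ⟨-, hc⟩
    have hc : c 0 • ρ1 + c 1 • ρ2 = 0 := by
      have : ∑ i, c i • (![ρ1, ρ2] i) = 0 := hc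
      simpa [Fin.sum_univ_two] using this
    obtain ⟨h0, h1⟩ := H.indep _ _ hc
    rw [Submodule.mem_bot]
    ext1 i
    fin_cases i
    · exact h0
    · exact h1
  rw [d1, d2, finrank_bot] at c2
  rw [d3, d4, finrank_bot] at c3
  have c1' := congrArg (Nat.cast (R := ℚ)) c1
  have c2' := congrArg (Nat.cast (R := ℚ)) c2
  have c3' := congrArg (Nat.cast (R := ℚ)) c3
  push_cast at c1' c2' c3'
  rw [finrank_Pk, Fin.sum_univ_two] at c3'
  simp only [Matrix.cons_val_zero, Matrix.cons_val_one] at c3'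
  rw [arDim]
  linarith

end Setup

/-- linear forms -/
def linF : (Fin 4 → ℂ) →ₗ[ℂ] S4 := Fintype.linearCombination ℂ (fun i => (X i : S4))

lemma linF_apply (v : Fin 4 → ℂ) : linF v = ∑ i, v i • (X i : S4) := rfl

lemma linF_single (i : Fin 4) : linF (Pi.single i 1) = X i := by
  simp [linF]

lemma linF_inj {v : Fin 4 → ℂ} (h : linF v = 0) : v = 0 := by
  ext1 i
  have := congrArg (eval (Pi.single i (1 : ℂ))) h
  simpa [linF_apply, smul_eval, Pi.single_apply] using this

lemma exists_proj (s : Set (Fin 4 → ℂ)) : ∃ ψ : S4 →ₐ[ℂ] S4,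
    (∀ p, p - ψ p ∈ Ideal.span (linF '' s)) ∧ (∀ v ∈ s, ψ (linF v) = 0) ∧
    (∀ v, v ∉ Submodule.span ℂ s → ψ (linF v) ≠ 0) := by
  set W := Submodule.span ℂ s with hW
  obtain ⟨g, hg⟩ := LinearMap.exists_leftInverse_of_injective W.subtype (by simp)
  have hg' : ∀ w : W, g w = w := fun w => LinearMap.congr_fun hg w
  let π : (Fin 4 → ℂ) →ₗ[ℂ] (Fin 4 → ℂ) := LinearMap.id - W.subtype ∘ₗ g
  have hπ : ∀ v, π v = v - (g v : Fin 4 → ℂ) := fun v => rfl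
  let ψ : S4 →ₐ[ℂ] S4 := aeval fun i => linF (π (Pi.single i 1))
  have hψ : ∀ v, ψ (linF v) = linF (π v) := by
    intro v
    have : ψ.toLinearMap ∘ₗ linF = linF ∘ₗ π := by
      apply LinearMap.pi_ext'
      intro i
      ext1
      simp [ψ, linF_single]
    exact LinearMap.congr_fun this v
  have hmem : ∀ w ∈ W, linF w ∈ Ideal.span (linF '' s) := by
    intro w hw
    induction hw using Submodule.span_induction with
    | mem x hx => exact Ideal.subset_span ⟨x, hx, rfl⟩
    | zero => simp
    | add x y _ _ hx hy => rw [map_add]; exact Ideal.add_mem _ hx hy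
    | smul a x _ hx =>
      rw [map_smul, MvPolynomial.smul_eq_C_mul]
      exact Ideal.mul_mem_left _ _ hx
  refine ⟨ψ, ?_, ?_, ?_⟩
  · intro p
    have : (Ideal.Quotient.mkₐ ℂ (Ideal.span (linF '' s))) =
        (Ideal.Quotient.mkₐ ℂ (Ideal.span (linF '' s))).comp ψ := by
      apply MvPolynomial.algHom_ext
      intro i
      simp only [AlgHom.comp_apply, Ideal.Quotient.mkₐ_eq_mk]
      rw [Ideal.Quotient.eq, ← linF_single, hψ, ← map_sub, hπ, sub_sub_cancel]
      exact hmem _ (g _).2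
    have h2 := AlgHom.congr_fun this p
    simp only [AlgHom.comp_apply, Ideal.Quotient.mkₐ_eq_mk] at h2
    exact (Ideal.Quotient.eq).1 h2
  · intro v hv
    rw [hψ, hπ]
    have := hg' ⟨v, Submodule.subset_span hv⟩
    simp only at this
    rw [this, sub_self, map_zero]
  · intro v hv h0
    rw [hψ] at h0
    have := linF_inj h0
    rw [hπ, sub_eq_zero] at this
    exact hv (this ▸ (g v).2)

lemma lin_regular (s : Set (Fin 4 → ℂ)) {v : Fin 4 → ℂ} (hv : v ∉ Submodule.span ℂ s) {t : S4}
    (h : linF v * t ∈ Ideal.span (linF '' s)) : t ∈ Ideal.span (linF '' s) := by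
  obtain ⟨ψ, h1, h2, h3⟩ := exists_proj s
  have hk : Ideal.span (linF '' s) ≤ RingHom.ker ψ := by
    rw [Ideal.span_le]
    rintro _ ⟨x, hx, rfl⟩
    exact h2 x hx
  have h4 : ψ (linF v * t) = 0 := hk h
  rw [map_mul] at h4
  have h5 := (mul_eq_zero.1 h4).resolve_left (h3 v hv)
  have := h1 t
  rwa [h5, sub_zero] at this

lemma lin_regular1 {v1 v2 : Fin 4 → ℂ} (hv : v2 ∉ Submodule.span ℂ {v1}) {t : S4}
    (h : linF v1 ∣ linF v2 * t) : linF v1 ∣ t := by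
  have := lin_regular {v1} hv (t := t) (by
    rw [Set.image_singleton, Ideal.mem_span_singleton]; exact h)
  rwa [Set.image_singleton, Ideal.mem_span_singleton] at this

lemma lin_regular2 {v1 v2 v3 : Fin 4 → ℂ} (hv : v3 ∉ Submodule.span ℂ {v1, v2}) {t a b : S4}
    (h : linF v3 * t = a * linF v1 + b * linF v2) : ∃ x y, t = x * linF v1 + y * linF v2 := by
  have := lin_regular {v1, v2} hv (t := t) (by
    rw [Set.image_pair, Ideal.mem_span_pair]; exact ⟨a, b, h.symm⟩)
  rw [Set.image_pair, Ideal.mem_span_pair] at this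
  obtain ⟨x, y, h⟩ := this
  exact ⟨x, y, h.symm⟩

namespace Setup
variable {f : S4} {d e1 e2 e3 : ℕ} {ρ1 ρ2 : Fin 4 → S4}

lemma ker_det' (H : Setup f d e1 e2 e3 ρ1 ρ2) {ρ : Fin 4 → S4} (h : ρ ∈ AR4 f)
    (h0 : detL ρ1 ρ2 ρ = 0) : ∃ a b : S4, ρ = a • ρ1 + b • ρ2 := by
  have hpd : ∀ i, (pderiv i f).IsHomogeneous (d - 1) := fun i => H.hf.pderiv
  have hdet : ∀ ρ, detL ρ1 ρ2 ρ = ∑ i, ρ i * detL ρ1 ρ2 (Pi.single i 1) := by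
    intro ρ
    rw [LinearMap.pi_apply_eq_sum_univ (detL ρ1 ρ2) ρ]
    refine Finset.sum_congr rfl fun i _ => ?_
    rw [smul_eq_mul]
    congr 2
    ext j
    simp [Pi.single_apply, eq_comm]
  have hN : ∀ i, (detL ρ1 ρ2 (Pi.single i 1)).IsHomogeneous (1 + e1 + e2) := by
    intro i
    have : VecHomog (Pi.single i 1) 0 := by
      intro j
      rw [Pi.single_apply]
      split_ifs
      · exact isHomogeneous_one _ _
      · exact isHomogeneous_zero _ _ _
    exact detL_homog H.v1 H.v2 this
  let τ : ℕ → Fin 4 → S4 := fun q i => homogeneousComponent q (ρ i)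
  have hτ : ∀ q, τ q ∈ Submodule.span S4 {ρ1, ρ2} := by
    intro q
    have t1 : τ q ∈ AR4 f := by
      rw [mem_AR4] at h ⊢
      have := congrArg (homogeneousComponent (q + (d - 1))) h
      rw [map_sum, map_zero] at this
      rw [← this]
      exact Finset.sum_congr rfl fun i _ => (hc_mul (hpd i)).symm
    have t2 : detL ρ1 ρ2 (τ q) = 0 := by
      have := congrArg (homogeneousComponent (q + (1 + e1 + e2))) h0
      rw [hdet, map_sum, map_zero] at this
      rw [hdet, ← this]
      exact Finset.sum_congr rfl fun i _ => (hc_mul (hN i)).symm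
    obtain ⟨a, b, hab⟩ := H.htame _ t1 q (fun i => homogeneousComponent_isHomogeneous _ _)
      (minors_of_detL H.hd H.hf H.hred H.h1 H.h2 t1 t2)
    rw [Submodule.mem_span_pair]
    exact ⟨a, b, hab.symm⟩
  have hsum : ρ = ∑ q ∈ Finset.range (Finset.univ.sup (fun i => (ρ i).totalDegree) + 1), τ q := by
    ext1 i
    rw [Finset.sum_apply]
    conv_lhs => rw [← sum_homogeneousComponent (ρ i)]
    refine Finset.sum_subset ?_ ?_
    · intro q hq
      have := Finset.le_sup (f := fun i => (ρ i).totalDegree) (Finset.mem_univ i)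
      simp only [Finset.mem_range] at hq ⊢
      omega
    · intro q _ hq
      apply homogeneousComponent_eq_zero
      simp at hq; omega
  have : ρ ∈ Submodule.span S4 {ρ1, ρ2} := by
    rw [hsum]; exact Submodule.sum_mem _ fun q _ => hτ q
  rw [Submodule.mem_span_pair] at this
  obtain ⟨a, b, hab⟩ := this
  exact ⟨a, b, hab.symm⟩

lemma three_forms (H : Setup f d e1 e2 e3 ρ1 ρ2) {B : S4} {v1 v2 v3 : Fin 4 → ℂ} (hv1 : v1 ≠ 0)
    (hv2 : v2 ∉ Submodule.span ℂ {v1}) (hv3 : v3 ∉ Submodule.span ℂ {v1, v2})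
    (m1 : linF v1 * B ∈ II f ρ1 ρ2) (m2 : linF v2 * B ∈ II f ρ1 ρ2)
    (m3 : linF v3 * B ∈ II f ρ1 ρ2) : B ∈ II f ρ1 ρ2 := by
  rw [mem_II] at m1 m2 m3 ⊢
  obtain ⟨σ1, s1, t1⟩ := m1
  obtain ⟨σ2, s2, t2⟩ := m2
  obtain ⟨σ3, s3, t3⟩ := m3
  have hx : linF v1 ≠ 0 := fun h => hv1 (linF_inj h)
  generalize hl1 : linF v1 = l1 at *
  generalize hl2 : linF v2 = l2 at *
  generalize hl3 : linF v3 = l3 at *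
  have kk : ∀ (σ σ' : Fin 4 → S4) (l l' : S4), σ ∈ AR4 f → σ' ∈ AR4 f →
      detL ρ1 ρ2 σ = f * (l * B) → detL ρ1 ρ2 σ' = f * (l' * B) →
      ∃ a b : S4, l' • σ - l • σ' = a • ρ1 + b • ρ2 := by
    intro σ σ' l l' hs hs' ht ht'
    refine H.ker_det' ((AR4 f).sub_mem ((AR4 f).smul_mem _ hs) ((AR4 f).smul_mem _ hs')) ?_
    rw [map_sub, map_smul, map_smul, ht, ht', smul_eq_mul, smul_eq_mul]
    ring
  obtain ⟨a12, b12, h12⟩ := kk σ1 σ2 l1 l2 s1 s2 t1 t2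
  obtain ⟨a13, b13, h13⟩ := kk σ1 σ3 l1 l3 s1 s3 t1 t3
  obtain ⟨a23, b23, h23⟩ := kk σ2 σ3 l2 l3 s2 s3 t2 t3
  have hz : (l3 * a12 - l2 * a13 + l1 * a23) • ρ1 + (l3 * b12 - l2 * b13 + l1 * b23) • ρ2 = 0 := by
    have : l3 • (a12 • ρ1 + b12 • ρ2) - l2 • (a13 • ρ1 + b13 • ρ2) + l1 • (a23 • ρ1 + b23 • ρ2)
        = 0 := by
      rw [← h12, ← h13, ← h23]; module
    rw [← this]; module
  obtain ⟨za, zb⟩ := H.indep _ _ hz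
  obtain ⟨x, y, hxy⟩ := lin_regular2 hv3 (t := a12) (a := -a23) (b := a13) (by
    rw [hl1, hl2, hl3]; linear_combination za)
  obtain ⟨x', y', hxy'⟩ := lin_regular2 hv3 (t := b12) (a := -b23) (b := b13) (by
    rw [hl1, hl2, hl3]; linear_combination zb)
  rw [hl1, hl2] at hxy hxy'
  have hrel : l2 • (σ1 - y • ρ1 - y' • ρ2) = l1 • (σ2 + x • ρ1 + x' • ρ2) := by
    rw [hxy, hxy'] at h12
    have : l2 • σ1 = l1 • σ2 + ((x * l1 + y * l2) • ρ1 + (x' * l1 + y' * l2) • ρ2) := by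
      rw [← h12]; module
    rw [smul_sub, smul_sub, this]
    module
  have hdiv : ∀ i, l1 ∣ (σ1 - y • ρ1 - y' • ρ2) i := by
    intro i
    rw [← hl1]
    refine lin_regular1 hv2 ?_
    rw [hl1, hl2]
    exact ⟨_, congrFun hrel i⟩
  choose τ hτ using hdiv
  have hτ' : σ1 - y • ρ1 - y' • ρ2 = l1 • τ := funext hτ
  refine ⟨τ, ?_, ?_⟩
  · have hm : l1 • τ ∈ AR4 f := by
      rw [← hτ']
      exact (AR4 f).sub_mem ((AR4 f).sub_mem s1 ((AR4 f).smul_mem _ H.h1))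
        ((AR4 f).smul_mem _ H.h2)
    rw [AR4, LinearMap.mem_ker, map_smul, smul_eq_mul] at hm
    rw [AR4, LinearMap.mem_ker]
    exact (mul_eq_zero.1 hm).resolve_left hx
  · have h5 : detL ρ1 ρ2 (l1 • τ) = f * (l1 * B) := by
      have := detL_self ρ1 ρ2 y y'
      rw [← hτ', sub_sub, map_sub, this, t1, sub_zero]
    rw [map_smul, smul_eq_mul] at h5
    apply mul_left_cancel₀ hx
    rw [h5]; ring

end Setup

/-- binary forms in the variables `X i`, `X j` -/
def binF (i j : Fin 4) (n : ℕ) : Polynomial ℂ →ₗ[ℂ] S4 :=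
  (rename ![i, j] : MvPolynomial (Fin 2) ℂ →ₐ[ℂ] S4).toLinearMap ∘ₗ Polynomial.homogenizeLM n

lemma binF_apply (i j : Fin 4) (n : ℕ) (p : Polynomial ℂ) :
    binF i j n p = rename ![i, j] (p.homogenize n) := rfl

lemma binF_homog (i j : Fin 4) (n : ℕ) (p : Polynomial ℂ) : (binF i j n p).IsHomogeneous n := by
  rw [binF_apply]
  exact (Polynomial.isHomogeneous_homogenize p).rename_isHomogeneous

lemma binF_ne {i j : Fin 4} (hij : i ≠ j) {n : ℕ} {p : Polynomial ℂ} (hp : p.natDegree ≤ n)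
    (h : binF i j n p = 0) : p = 0 := by
  have hinj : Function.Injective ![i, j] := by
    intro x y
    fin_cases x <;> fin_cases y <;> simp [hij, hij.symm]
  rw [binF_apply] at h
  have := rename_injective _ hinj (h.trans (map_zero _).symm)
  exact Polynomial.eq_zero_of_homogenize_eq_zero hp this

lemma binary_step (I : Ideal S4) (i j : Fin 4) (n : ℕ) : ∀ (B : S4) (_ : B ∉ I)
    (p : Polynomial ℂ) (_ : p ≠ 0) (_ : p.natDegree ≤ n) (_ : binF i j n p * B ∈ I),
    ∃ (α β : ℂ) (c : S4), (α ≠ 0 ∨ β ≠ 0) ∧ c * B ∉ I ∧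
      linF (α • Pi.single i 1 + β • Pi.single j 1) * (c * B) ∈ I := by
  induction n with
  | zero =>
    intro B hB p hp hn h
    exfalso
    rw [Polynomial.eq_C_of_natDegree_le_zero hn] at h hp
    rw [binF_apply, Polynomial.homogenize_C] at h
    simp only [pow_zero, mul_one, rename_C] at h
    have h0 : p.coeff 0 ≠ 0 := by
      intro h; simp [h] at hp
    have := I.mul_mem_left (C (p.coeff 0)⁻¹) h
    rw [← mul_assoc, ← C_mul, inv_mul_cancel₀ h0, C_1, one_mul] at this
    exact hB this
  | succ n ih =>
    intro B hB p hp hn h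
    obtain ⟨q, α, β, hq0, hqn, hαβ, hfac⟩ : ∃ (q : Polynomial ℂ) (α β : ℂ), q ≠ 0 ∧
        q.natDegree ≤ n ∧ (α ≠ 0 ∨ β ≠ 0) ∧
        binF i j (n + 1) p = linF (α • Pi.single i 1 + β • Pi.single j 1) * binF i j n q := by
      by_cases hdeg : p.natDegree = 0
      · refine ⟨p, 0, 1, hp, by omega, Or.inr one_ne_zero, ?_⟩
        have := Polynomial.homogenize_mul (1 : Polynomial ℂ) p (m := 1) (n := n) (by simp) (by omega)
        rw [one_mul, add_comm] at this
        rw [binF_apply, this, map_mul, binF_apply]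
        simp [linF_single]
      · obtain ⟨r, hr⟩ := Complex.exists_root (f := p)
          (Polynomial.natDegree_pos_iff_degree_pos.1 (Nat.pos_of_ne_zero hdeg))
        obtain ⟨q, rfl⟩ := Polynomial.dvd_iff_isRoot.2 hr
        have hq0 : q ≠ 0 := by rintro rfl; simp at hp
        have hqn : q.natDegree ≤ n := by
          rw [Polynomial.natDegree_mul (Polynomial.X_sub_C_ne_zero r) hq0,
            Polynomial.natDegree_X_sub_C] at hn
          omega
        refine ⟨q, 1, -r, hq0, hqn, Or.inl one_ne_zero, ?_⟩
        have := Polynomial.homogenize_mul (Polynomial.X - Polynomial.C r) q (m := 1) (n := n)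
          (by simp) hqn
        rw [add_comm] at this
        rw [binF_apply, this, map_mul, binF_apply]
        congr 1
        rw [Polynomial.homogenize_sub, Polynomial.homogenize_X one_ne_zero,
          Polynomial.homogenize_C]
        simp [linF_single, MvPolynomial.smul_eq_C_mul, sub_eq_add_neg]
    by_cases hB' : binF i j n q * B ∈ I
    · exact ih B hB q hq0 hqn hB'
    · refine ⟨α, β, binF i j n q, hαβ, hB', ?_⟩
      rw [← mul_assoc, ← hfac]
      exact h

lemma la1 {α β : ℂ} (h : α ≠ 0 ∨ β ≠ 0) :
    (α • Pi.single 0 1 + β • Pi.single 1 1 : Fin 4 → ℂ) ≠ 0 := by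
  intro hx
  have h0 := congrFun hx 0
  have h1 := congrFun hx 1
  simp [Pi.single_apply] at h0 h1
  rcases h with h | h
  · exact h h0
  · exact h h1

lemma la2 {α1 β1 α β : ℂ} (h : α ≠ 0 ∨ β ≠ 0) :
    (α • Pi.single 2 1 + β • Pi.single 3 1 : Fin 4 → ℂ) ∉
      Submodule.span ℂ {(α1 • Pi.single 0 1 + β1 • Pi.single 1 1 : Fin 4 → ℂ)} := by
  rw [Submodule.mem_span_singleton]
  rintro ⟨x, hx⟩
  have h0 := congrFun hx 2
  have h1 := congrFun hx 3
  simp [Pi.single_apply] at h0 h1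
  rcases h with h | h
  · exact h h0.symm
  · exact h h1.symm

lemma la3 {α1 β1 α2 β2 α β : ℂ} {i j : Fin 4} (h : α ≠ 0 ∨ β ≠ 0)
    (hi : (i = 0 ∧ β1 ≠ 0) ∨ (i = 1 ∧ α1 ≠ 0)) (hj : (j = 2 ∧ β2 ≠ 0) ∨ (j = 3 ∧ α2 ≠ 0)) :
    (α • Pi.single i 1 + β • Pi.single j 1 : Fin 4 → ℂ) ∉
      Submodule.span ℂ {(α1 • Pi.single 0 1 + β1 • Pi.single 1 1 : Fin 4 → ℂ),
        (α2 • Pi.single 2 1 + β2 • Pi.single 3 1 : Fin 4 → ℂ)} := by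
  rw [Submodule.mem_span_pair]
  rintro ⟨x, y, hx⟩
  have h0 := congrFun hx 0
  have h1 := congrFun hx 1
  have h2 := congrFun hx 2
  have h3 := congrFun hx 3
  rcases hi with ⟨rfl, hi⟩ | ⟨rfl, hi⟩ <;> rcases hj with ⟨rfl, hj⟩ | ⟨rfl, hj⟩ <;>
    simp [Pi.single_apply] at h0 h1 h2 h3 <;> grind

namespace Setup
variable {f : S4} {d e1 e2 e3 : ℕ} {ρ1 ρ2 : Fin 4 → S4}

lemma Ik_fd (H : Setup f d e1 e2 e3 ρ1 ρ2) (k : ℕ) : FiniteDimensional ℂ (Ik f ρ1 ρ2 e3 k) :=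
  Submodule.finiteDimensional_of_le (H.Ik_le k)

lemma exists_binary (H : Setup f d e1 e2 e3 ρ1 ρ2) {i j : Fin 4} (hij : i ≠ j) (n : ℕ)
    (hn : sQ n < Module.finrank ℂ (Ik f ρ1 ρ2 e3 n) + (n + 1)) :
    ∃ p : Polynomial ℂ, p ≠ 0 ∧ p.natDegree ≤ n ∧ binF i j n p ∈ II f ρ1 ρ2 := by
  let P := Polynomial.degreeLT ℂ (n + 1)
  have hdeg : ∀ p ∈ P, p.natDegree ≤ n := by
    intro p hp
    rw [Polynomial.mem_degreeLT] at hp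
    by_cases h0 : p = 0
    · simp [h0]
    · rw [Polynomial.degree_eq_natDegree h0] at hp
      have : p.natDegree < n + 1 := by exact_mod_cast hp
      omega
  have : FiniteDimensional ℂ P := Module.Finite.equiv (Polynomial.degreeLTEquiv ℂ (n + 1)).symm
  have hP : Module.finrank ℂ P = n + 1 := by
    rw [(Polynomial.degreeLTEquiv ℂ (n + 1)).finrank_eq]; simp
  have r := rank_null P (binF i j n)
  have hker : P ⊓ LinearMap.ker (binF i j n) = ⊥ := by
    rw [eq_bot_iff]
    rintro p ⟨hp, hp0⟩
    exact binF_ne hij (hdeg p hp) hp0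
  rw [hker, finrank_bot, hP, add_zero] at r
  have := H.Ik_fd n
  have r2 := Submodule.finrank_sup_add_finrank_inf_eq (P.map (binF i j n)) (Ik f ρ1 ρ2 e3 n)
  have r3 : Module.finrank ℂ (P.map (binF i j n) ⊔ Ik f ρ1 ρ2 e3 n : Submodule ℂ S4)
      ≤ Module.finrank ℂ (Hk n) := by
    apply Submodule.finrank_mono
    apply sup_le _ (H.Ik_le n)
    rintro _ ⟨p, -, rfl⟩
    exact binF_homog _ _ _ _
  rw [← finrank_HkQ] at hn
  have hn' : Module.finrank ℂ (Hk n) < Module.finrank ℂ (Ik f ρ1 ρ2 e3 n) + (n + 1) := by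
    exact_mod_cast hn
  have r4 : P.map (binF i j n) ⊓ Ik f ρ1 ρ2 e3 n ≠ ⊥ := by
    intro h
    rw [h, finrank_bot] at r2
    omega
  obtain ⟨x, ⟨⟨p, hp, rfl⟩, hx⟩, hx0⟩ := Submodule.exists_mem_ne_zero_of_ne_bot r4
  refine ⟨p, ?_, hdeg p hp, Ik_le_II _ hx⟩
  rintro rfl
  simp at hx0

lemma one_mem (H : Setup f d e1 e2 e3 ρ1 ρ2) (n : ℕ)
    (hn : sQ n < Module.finrank ℂ (Ik f ρ1 ρ2 e3 n) + (n + 1)) : (1 : S4) ∈ II f ρ1 ρ2 := by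
  by_contra h1
  have step : ∀ (B : S4), B ∉ II f ρ1 ρ2 → ∀ i j : Fin 4, i ≠ j → ∃ (α β : ℂ) (c : S4),
      (α ≠ 0 ∨ β ≠ 0) ∧ c * B ∉ II f ρ1 ρ2 ∧
      linF (α • Pi.single i 1 + β • Pi.single j 1) * (c * B) ∈ II f ρ1 ρ2 := by
    intro B hB i j hij
    obtain ⟨p, hp, hpn, hpI⟩ := H.exists_binary hij n hn
    exact binary_step _ i j n B hB p hp hpn (Ideal.mul_mem_right _ _ hpI)
  obtain ⟨α1, β1, c1, n1, b1, m1⟩ := step 1 h1 0 1 (by decide)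
  obtain ⟨α2, β2, c2, n2, b2, m2⟩ := step _ b1 2 3 (by decide)
  obtain ⟨i, hi⟩ : ∃ i : Fin 4, (i = 0 ∧ β1 ≠ 0) ∨ (i = 1 ∧ α1 ≠ 0) := by
    rcases n1 with h | h
    · exact ⟨1, Or.inr ⟨rfl, h⟩⟩
    · exact ⟨0, Or.inl ⟨rfl, h⟩⟩
  obtain ⟨j, hj⟩ : ∃ j : Fin 4, (j = 2 ∧ β2 ≠ 0) ∨ (j = 3 ∧ α2 ≠ 0) := by
    rcases n2 with h | h
    · exact ⟨3, Or.inr ⟨rfl, h⟩⟩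
    · exact ⟨2, Or.inl ⟨rfl, h⟩⟩
  have hij : i ≠ j := by
    rcases hi with ⟨rfl, -⟩ | ⟨rfl, -⟩ <;> rcases hj with ⟨rfl, -⟩ | ⟨rfl, -⟩ <;> decide
  obtain ⟨α3, β3, c3, n3, b3, m3⟩ := step _ b2 i j hij
  have m1' : linF (α1 • Pi.single 0 1 + β1 • Pi.single 1 1) * (c3 * (c2 * (c1 * 1)))
      ∈ II f ρ1 ρ2 := by
    have := Ideal.mul_mem_left _ (c3 * c2) m1
    convert this using 1; ring
  have m2' : linF (α2 • Pi.single 2 1 + β2 • Pi.single 3 1) * (c3 * (c2 * (c1 * 1)))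
      ∈ II f ρ1 ρ2 := by
    have := Ideal.mul_mem_left _ c3 m2
    convert this using 1; ring
  refine b3 (H.three_forms ?_ ?_ ?_ m1' m2' m3)
  · exact la1 n1
  · exact la2 n2
  · exact la3 n3 hi hj

lemma comp_det (H : Setup f d e1 e2 e3 ρ1 ρ2) {ρ : Fin 4 → S4} (h : ρ ∈ AR4 f) (q : ℕ) :
    (fun i => homogeneousComponent q (ρ i)) ∈ AR4 f ∧
    detL ρ1 ρ2 (fun i => homogeneousComponent q (ρ i))
      = homogeneousComponent (q + (1 + e1 + e2)) (detL ρ1 ρ2 ρ) := by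
  have hpd : ∀ i, (pderiv i f).IsHomogeneous (d - 1) := fun i => H.hf.pderiv
  have hdet : ∀ ρ, detL ρ1 ρ2 ρ = ∑ i, ρ i * detL ρ1 ρ2 (Pi.single i 1) := by
    intro ρ
    rw [LinearMap.pi_apply_eq_sum_univ (detL ρ1 ρ2) ρ]
    refine Finset.sum_congr rfl fun i _ => ?_
    rw [smul_eq_mul]
    congr 2
    ext j
    simp [Pi.single_apply, eq_comm]
  have hN : ∀ i, (detL ρ1 ρ2 (Pi.single i 1)).IsHomogeneous (1 + e1 + e2) := by
    intro i
    have : VecHomog (Pi.single i 1) 0 := by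
      intro j
      rw [Pi.single_apply]
      split_ifs
      · exact isHomogeneous_one _ _
      · exact isHomogeneous_zero _ _ _
    exact detL_homog H.v1 H.v2 this
  constructor
  · rw [mem_AR4] at h ⊢
    have := congrArg (homogeneousComponent (q + (d - 1))) h
    rw [map_sum, map_zero] at this
    rw [← this]
    exact Finset.sum_congr rfl fun i _ => (hc_mul (hpd i)).symm
  · rw [hdet, hdet ρ, map_sum]
    exact Finset.sum_congr rfl fun i _ => (hc_mul (hN i)).symm

lemma free_of_one (H : Setup f d e1 e2 e3 ρ1 ρ2) (h : (1 : S4) ∈ II f ρ1 ρ2) :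
    IsFreeWith f e1 e2 e3 := by
  rw [mem_II] at h
  obtain ⟨ρ, hρ, hd⟩ := h
  obtain ⟨c1, c2⟩ := H.comp_det hρ e3
  set ρ3 : Fin 4 → S4 := fun i => homogeneousComponent e3 (ρ i)
  rw [hd, mul_one, homogeneousComponent_eq_self (by
    have := H.he3
    rw [show e3 + (1 + e1 + e2) = d by omega]; exact H.hf)] at c2
  have hf0 := H.hred.ne_zero
  refine ⟨H.he12, H.he23, ρ1, ρ2, ρ3, H.h1, H.h2, c1, H.v1, H.v2,
    fun i => homogeneousComponent_isHomogeneous _ _, ?_, ?_⟩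
  · intro σ hσ
    obtain ⟨p, hp⟩ := H.exists_p hσ
    obtain ⟨a, b, hab⟩ := H.ker_det' ((AR4 f).sub_mem hσ ((AR4 f).smul_mem p c1)) (by
      rw [map_sub, map_smul, c2, hp, smul_eq_mul]; ring)
    exact ⟨a, b, p, by rw [← hab]; simp⟩
  · intro a b c habc
    have := congrArg (detL ρ1 ρ2) habc
    rw [map_add, detL_self, map_smul, c2, map_zero, zero_add, smul_eq_mul] at this
    have hc := (mul_eq_zero.1 this).resolve_right hf0
    rw [hc, zero_smul, add_zero] at habc
    obtain ⟨ha, hb⟩ := H.indep _ _ habc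
    exact ⟨ha, hb, hc⟩

end Setup

/-- image of `Hk m` under an injective multiplication map -/
lemma finrank_smul_image {n : ℕ} (m : ℕ) (a : Fin n → S4) (ha : a ≠ 0) :
    (Module.finrank ℂ ((Hk m).map
      ((LinearMap.toSpanSingleton S4 (Fin n → S4) a).restrictScalars ℂ)) : ℚ) = sQ m := by
  have h := rank_null (Hk m) ((LinearMap.toSpanSingleton S4 (Fin n → S4) a).restrictScalars ℂ)
  have hk : Hk m ⊓ LinearMap.ker
      ((LinearMap.toSpanSingleton S4 (Fin n → S4) a).restrictScalars ℂ) = ⊥ := by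
    rw [eq_bot_iff]
    rintro c ⟨-, hc⟩
    have hc : c • a = 0 := hc
    rw [Submodule.mem_bot]
    exact (smul_eq_zero.1 hc).resolve_right ha
  rw [hk, finrank_bot, add_zero] at h
  rw [h, finrank_HkQ]

lemma nf_count {f : S4} {K m : ℕ} {δ ε q : Fin 4 → ℕ} {ρ : Fin 4 → Fin 4 → S4} {a : Fin 4 → S4}
    (hρ : ∀ i, ρ i ∈ AR4 f) (hq : ∀ i, VecHomog (ρ i) (q i)) (hδ : ∀ i, δ i + q i = K)
    (hε : ∀ i, m + ε i = δ i) (ha : ∀ i, (a i).IsHomogeneous (ε i)) (ha0 : a ≠ 0)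
    (hgen : ∀ σ ∈ AR4 f, ∃ b : Fin 4 → S4, σ = ∑ i, b i • ρ i)
    (hrel : (∑ i, a i • ρ i) = 0)
    (hker : ∀ b : Fin 4 → S4, (∑ i, b i • ρ i) = 0 → ∃ c : S4, b = c • a) :
    (arDim f K : ℚ) + sQ m = ∑ i, sQ (δ i) := by
  have c := rank_null (Pk δ) ((Setup.combL ρ).restrictScalars ℂ)
  have d1 : (Pk δ).map ((Setup.combL ρ).restrictScalars ℂ) = ARgr f K := by
    ext σ
    simp only [Submodule.mem_map, mem_Pk, mem_ARgr, LinearMap.coe_restrictScalars,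
      Setup.combL_apply]
    constructor
    · rintro ⟨b, hb, rfl⟩
      refine ⟨(AR4 f).sum_mem fun i _ => (AR4 f).smul_mem _ (hρ i), ?_⟩
      intro j
      rw [Finset.sum_apply]
      refine IsHomogeneous.sum _ _ _ fun i _ => ?_
      rw [← hδ i]
      exact (hb i).mul (hq i j)
    · rintro ⟨h, hK⟩
      obtain ⟨b, rfl⟩ := hgen σ h
      refine ⟨fun i => homogeneousComponent (δ i) (b i),
        fun i => homogeneousComponent_isHomogeneous _ _, ?_⟩
      ext1 j
      rw [← homogeneousComponent_eq_self (hK j), Finset.sum_apply, Finset.sum_apply, map_sum]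
      refine Finset.sum_congr rfl fun i _ => ?_
      exact (hc_mul' (hq i j) (hδ i)).symm
  have d2 : Pk δ ⊓ LinearMap.ker ((Setup.combL ρ).restrictScalars ℂ)
      = (Hk m).map ((LinearMap.toSpanSingleton S4 (Fin 4 → S4) a).restrictScalars ℂ) := by
    ext b
    simp only [Submodule.mem_map, Submodule.mem_inf, mem_Pk, LinearMap.mem_ker,
      LinearMap.coe_restrictScalars, Setup.combL_apply, LinearMap.toSpanSingleton_apply]
    constructor
    · rintro ⟨hb, h0⟩
      obtain ⟨c, rfl⟩ := hker b h0
      obtain ⟨i, hi⟩ := Function.ne_iff.1 ha0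
      exact ⟨c, hom_of_mul (ha i) hi (hε i) (hb i), rfl⟩
    · rintro ⟨c, hc, rfl⟩
      constructor
      · intro i
        rw [← hε i]
        exact IsHomogeneous.mul hc (ha i)
      · simp only [Pi.smul_apply, smul_assoc]
        rw [← Finset.smul_sum, hrel, smul_zero]
  rw [d1, d2] at c
  have c' := congrArg (Nat.cast (R := ℚ)) c
  push_cast at c'
  rw [finrank_Pk, finrank_smul_image _ _ ha0] at c'
  exact c'

lemma arch_nonneg {x c : ℚ} {N : ℕ} (h : ∀ k : ℕ, N ≤ k → 0 ≤ x * k + c) : 0 ≤ x := by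
  by_contra hx
  push Not at hx
  obtain ⟨n, hn⟩ := exists_nat_gt (c / (-x))
  have h1 := h (N + n) (by omega)
  rw [div_lt_iff₀ (by linarith)] at hn
  push_cast at h1
  have : (0:ℚ) ≤ N := by positivity
  nlinarith

namespace Setup
variable {f : S4} {d e1 e2 e3 : ℕ} {ρ1 ρ2 : Fin 4 → S4}

lemma defect (H : Setup f d e1 e2 e3 ρ1 ρ2) (a b : ℤ)
    (hHilb : ∃ N : ℕ, ∀ k : ℕ, N ≤ k → (milnor4 f k : ℤ) = a * k + b) :
    ∃ (c : ℚ) (N : ℕ), ∀ k : ℕ, N ≤ k → sQ k - Module.finrank ℂ (Ik f ρ1 ρ2 e3 k)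
      = ((((e1 : ℤ) + e2 + e3) ^ 2 - ((e1 : ℤ) * e2 + (e1 : ℤ) * e3 + (e2 : ℤ) * e3) - a : ℤ) : ℚ)
        * k + c := by
  obtain ⟨N, hN⟩ := hHilb
  have h12 := H.he12
  have h23 := H.he23
  let s := e1 + e2 + e3
  refine ⟨sQ 0 + sQ (e3 + s) + sQ (e3 - e1) + sQ (e3 - e2) - 4 * sQ e3 - a * (e3 + s) - b, N, ?_⟩
  intro k hk
  have m := milnor_count H.hf (s := s) H.he3 (k + e3)
  have h := hN (k + e3 + s) (by omega)
  have h' : (milnor4 f (k + e3 + s) : ℚ) = a * ((k : ℚ) + e3 + s) + b := by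
    exact_mod_cast h
  have r := H.ar_count k
  rw [h', r] at m
  have key : (Module.finrank ℂ (Ik f ρ1 ρ2 e3 k) : ℚ)
      = a * ((k : ℚ) + e3 + s) + b + 4 * sQ (k + e3) - sQ (k + e3 + s)
        - sQ (k + e3 - e1) - sQ (k + e3 - e2) := by linarith
  rw [key]
  simp only [sQ, s]
  rw [Nat.cast_sub (by omega : e1 ≤ k + e3), Nat.cast_sub (by omega : e2 ≤ k + e3),
    Nat.cast_sub (by omega : e1 ≤ e3), Nat.cast_sub (by omega : e2 ≤ e3)]
  push_cast
  ring

lemma rank_le (H : Setup f d e1 e2 e3 ρ1 ρ2) (k : ℕ) :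
    (Module.finrank ℂ (Ik f ρ1 ρ2 e3 k) : ℚ) ≤ sQ k := by
  rw [← finrank_HkQ]
  exact_mod_cast Submodule.finrank_mono (H.Ik_le k)

lemma part1 (H : Setup f d e1 e2 e3 ρ1 ρ2) (hnf : (1 : S4) ∉ II f ρ1 ρ2) {x : ℤ} {c : ℚ} {N : ℕ}
    (h : ∀ k : ℕ, N ≤ k → sQ k - Module.finrank ℂ (Ik f ρ1 ρ2 e3 k) = (x : ℚ) * k + c) :
    1 ≤ x := by
  have h0 : (0 : ℚ) ≤ x := arch_nonneg (c := c) (N := N) fun k hk => by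
    rw [← h k hk]
    have := H.rank_le k
    linarith
  have h0 : 0 ≤ x := by exact_mod_cast h0
  by_contra h1
  have hx : x = 0 := by omega
  subst hx
  obtain ⟨n, hn⟩ := exists_nat_gt c
  refine hnf (H.one_mem (N + n) ?_)
  have := h (N + n) (by omega)
  push_cast at this ⊢
  have : (0 : ℚ) ≤ N := by positivity
  linarith

lemma part2 (H : Setup f d e1 e2 e3 ρ1 ρ2) (hnf : IsNearlyFreeWith f d e1 e2 (e3 + 1))
    {x : ℤ} {c : ℚ} {N : ℕ}
    (h : ∀ k : ℕ, N ≤ k → sQ k - Module.finrank ℂ (Ik f ρ1 ρ2 e3 k) = (x : ℚ) * k + c) :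
    x = 1 := by
  have h12 := H.he12
  have h23 := H.he23
  obtain ⟨-, -, -, ρ, a, hρ, q0, q1, q2, q3, hgen, a0, a1, a2, a3, ha0, hrel, hker⟩ := hnf
  have key : ∀ k : ℕ, sQ (k + 2) - Module.finrank ℂ (Ik f ρ1 ρ2 e3 (k + 2)) = k + 3 := by
    intro k
    have c1 := nf_count (f := f) (K := k + 2 + e3) (m := k)
      (δ := ![k + 2 + e3 - e1, k + 2 + e3 - e2, k + 1, k + 1])
      (ε := ![e3 + 1 - e1 + 1, e3 + 1 - e2 + 1, 1, 1]) (q := ![e1, e2, e3 + 1, e3 + 1]) hρ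
      (by intro i; fin_cases i; exacts [q0, q1, q2, q3])
      (by intro i; fin_cases i <;> simp <;> omega)
      (by intro i; fin_cases i <;> simp <;> omega)
      (by intro i; fin_cases i; exacts [a0, a1, a2, a3]) ha0 hgen hrel hker
    have c2 := H.ar_count (k + 2)
    simp [Fin.sum_univ_four] at c1
    have : (Module.finrank ℂ (Ik f ρ1 ρ2 e3 (k + 2)) : ℚ) = 2 * sQ (k + 1) - sQ k := by linarith
    rw [this]
    simp only [sQ]
    push_cast
    ring
  have k1 := key N
  have k2 := key (N + 1)
  rw [h _ (by omega)] at k1 k2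
  push_cast at k1 k2
  have : (x : ℚ) = 1 := by linarith
  exact_mod_cast this

end Setup

lemma growth {r : ℕ → ℚ} {c : ℚ} {N M : ℕ} (h : ∀ k : ℕ, N ≤ k → sQ k - r k = k + c)
    (hr : ∀ k : ℕ, M ≤ k → r (k + 1) ≤ sQ k) : False := by
  obtain ⟨n, hn⟩ := exists_nat_gt c
  have h1 := h (N + M + n + 1) (by omega)
  have h2 := hr (N + M + n) (by omega)
  have h3 : sQ (N + M + n + 1) - sQ (N + M + n) ≤ ((N + M + n + 1 : ℕ) : ℚ) + c := by linarith
  simp only [sQ] at h3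
  have hj : (n : ℚ) ≤ ((N + M + n : ℕ) : ℚ) := by exact_mod_cast Nat.le_add_left n (N + M)
  have hj0 : (0 : ℚ) ≤ ((N + M + n : ℕ) : ℚ) := Nat.cast_nonneg _
  rw [Nat.cast_succ] at h3
  generalize ((N + M + n : ℕ) : ℚ) = j at *
  nlinarith

lemma sQ_mono {a b : ℕ} (h : a ≤ b) : sQ a ≤ sQ b := by
  have : (a : ℚ) ≤ b := by exact_mod_cast h
  have ha : (0 : ℚ) ≤ a := by positivity
  simp only [sQ]
  gcongr

lemma linear_form {p : S4} (h : p.IsHomogeneous 1) : ∃ v, p = linF v := by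
  have h : p ∈ homogeneousSubmodule (Fin 4) ℂ 1 := h
  rw [homogeneousSubmodule_one_eq_span_X, Submodule.mem_span_range_iff_exists_fun] at h
  obtain ⟨c, hc⟩ := h
  exact ⟨c, hc.symm⟩

namespace Setup
variable {f : S4} {d e1 e2 e3 : ℕ} {ρ1 ρ2 : Fin 4 → S4}

/-- The pieces of the ideal cannot all be divisible by a form of positive degree. -/
lemma not_dvd (H : Setup f d e1 e2 e3 ρ1 ρ2) {c : ℚ} {N : ℕ}
    (h : ∀ k : ℕ, N ≤ k → sQ k - Module.finrank ℂ (Ik f ρ1 ρ2 e3 k) = k + c)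
    {p : S4} {n : ℕ} (hn : 1 ≤ n) (hp : p.IsHomogeneous n)
    (hall : ∀ k, ∀ x ∈ Ik f ρ1 ρ2 e3 k, p ∣ x) : False := by
  refine growth (M := n) h (fun k hk => ?_)
  obtain ⟨j, rfl⟩ := Nat.exists_eq_add_of_le hk
  let g : S4 →ₗ[ℂ] S4 := (LinearMap.mulRight S4 p).restrictScalars ℂ
  have hle : Ik f ρ1 ρ2 e3 (n + j + 1) ≤ (Hk (j + 1)).map g := by
    intro x hx
    obtain ⟨t, ht⟩ := hall _ x hx
    refine ⟨homogeneousComponent (j + 1) t, homogeneousComponent_isHomogeneous _ _, ?_⟩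
    have hx' := H.Ik_le _ hx
    rw [← homogeneousComponent_eq_self hx', ht, mul_comm p t,
      hc_mul' hp (show (j + 1) + n = n + j + 1 by omega)]
    rfl
  have h1 := Submodule.finrank_mono hle
  have h2 := Submodule.finrank_map_le g (Hk (j + 1))
  have h3 : (Module.finrank ℂ (Ik f ρ1 ρ2 e3 (n + j + 1)) : ℚ) ≤ sQ (j + 1) := by
    rw [← finrank_HkQ]
    exact_mod_cast h1.trans h2
  exact h3.trans (sQ_mono (by omega))

lemma two_bound (H : Setup f d e1 e2 e3 ρ1 ρ2) {p q : S4} {m n : ℕ} (hp : p.IsHomogeneous m)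
    (hq : q.IsHomogeneous n) (hp0 : p ≠ 0)
    (hall : ∀ k, ∀ x ∈ Ik f ρ1 ρ2 e3 k, ∃ b b' : S4, x = b * p + b' * q) (j : ℕ) :
    (Module.finrank ℂ (Ik f ρ1 ρ2 e3 (j + m + n)) : ℚ) + sQ j ≤ sQ (j + n) + sQ (j + m) := by
  have c := rank_null (Pk ![j + n, j + m]) ((combL ![p, q]).restrictScalars ℂ)
  have h1 : Ik f ρ1 ρ2 e3 (j + m + n) ≤
      (Pk ![j + n, j + m]).map ((combL ![p, q]).restrictScalars ℂ) := by
    intro x hx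
    obtain ⟨b, b', hb⟩ := hall _ x hx
    refine ⟨![homogeneousComponent (j + n) b, homogeneousComponent (j + m) b'], ?_, ?_⟩
    · change _ ∈ Pk ![j + n, j + m]
      rw [mem_Pk]
      intro i
      fin_cases i
      · exact homogeneousComponent_isHomogeneous _ _
      · exact homogeneousComponent_isHomogeneous _ _
    · have hx' := H.Ik_le _ hx
      rw [← homogeneousComponent_eq_self hx', hb, map_add,
        hc_mul' hp (show j + n + m = j + m + n by omega), hc_mul' hq rfl]
      simp [combL_apply, Fin.sum_univ_two]
  have h2 : (Hk j).map ((LinearMap.toSpanSingleton S4 (Fin 2 → S4) ![q, -p]).restrictScalars ℂ)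
      ≤ Pk ![j + n, j + m] ⊓ LinearMap.ker ((combL ![p, q]).restrictScalars ℂ) := by
    rintro _ ⟨t, ht, rfl⟩
    have ht : t.IsHomogeneous j := ht
    constructor
    · change _ ∈ Pk ![j + n, j + m]
      rw [mem_Pk]
      intro i
      fin_cases i
      · exact ht.mul hq
      · exact ht.mul hp.neg
    · rw [SetLike.mem_coe, LinearMap.mem_ker]
      simp [combL_apply, Fin.sum_univ_two]
      ring
  have hne : (![q, -p] : Fin 2 → S4) ≠ 0 := by
    intro h
    have := congrFun h 1
    simp [hp0] at this
  have := Submodule.finiteDimensional_of_le (inf_le_left :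
    Pk ![j + n, j + m] ⊓ LinearMap.ker ((combL ![p, q]).restrictScalars ℂ) ≤ Pk ![j + n, j + m])
  have r1 := Submodule.finrank_mono h1
  have r2 := Submodule.finrank_mono h2
  have r3 := finrank_smul_image j _ hne
  have r4 := finrank_Pk ![j + n, j + m]
  rw [Fin.sum_univ_two] at r4
  simp only [Matrix.cons_val_zero, Matrix.cons_val_one] at r4
  rw [← r3, ← r4]
  have r5 := c ▸ Nat.add_le_add r1 r2
  exact_mod_cast r5

lemma degree_pos (H : Setup f d e1 e2 e3 ρ1 ρ2) (hnf : (1 : S4) ∉ II f ρ1 ρ2)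
    {ρ : Fin 4 → S4} {q : ℕ} {p : S4} (h : ρ ∈ AR4 f) (hq : VecHomog ρ q)
    (hp : detL ρ1 ρ2 ρ = f * p) :
    ∃ m, 1 ≤ m ∧ p.IsHomogeneous m ∧ (p ≠ 0 → q = m + e3) := by
  by_cases hp0 : p = 0
  · exact ⟨1, le_rfl, by rw [hp0]; exact isHomogeneous_zero _ _ _, fun h => absurd hp0 h⟩
  rcases lt_trichotomy q e3 with hlt | heq | hgt
  · exact absurd (H.zero_of_det hq hlt hp) hp0
  · exfalso
    have h0 : p.IsHomogeneous 0 := H.homog_of_det (k := 0) (by rwa [zero_add, ← heq]) hp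
    have hmem : p ∈ II f ρ1 ρ2 := (mem_II _ _ _ _).2 ⟨ρ, h, hp⟩
    have hC : p = C (coeff 0 p) := by
      rw [← totalDegree_eq_zero_iff_eq_C]
      exact h0.totalDegree hp0
    have hc : coeff 0 p ≠ 0 := by
      intro h; rw [h, C_0] at hC; exact hp0 hC
    have := Ideal.mul_mem_left _ (C (coeff 0 p)⁻¹) hmem
    rw [hC, coeff_C, if_pos rfl, ← C_mul, inv_mul_cancel₀ hc, C_1] at this
    exact hnf this
  · obtain ⟨m, rfl⟩ := Nat.exists_eq_add_of_lt hgt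
    exact ⟨m + 1, by omega, H.homog_of_det (k := m + 1)
      (by rwa [show m + 1 + e3 = e3 + m + 1 by omega]) hp, fun _ => by omega⟩

lemma part3 (H : Setup f d e1 e2 e3 ρ1 ρ2) (hnf : (1 : S4) ∉ II f ρ1 ρ2) {c : ℚ} {N : ℕ}
    (h : ∀ k : ℕ, N ≤ k → sQ k - Module.finrank ℂ (Ik f ρ1 ρ2 e3 k) = k + c)
    {ρ3 ρ4 : Fin 4 → S4} {q3 q4 : ℕ} (h3 : ρ3 ∈ AR4 f) (h4 : ρ4 ∈ AR4 f)
    (hq3 : VecHomog ρ3 q3) (hq4 : VecHomog ρ4 q4)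
    (hgen : ∀ ρ ∈ AR4 f, ∃ b1 b2 b3 b4 : S4, ρ = b1 • ρ1 + b2 • ρ2 + b3 • ρ3 + b4 • ρ4) :
    IsNearlyFreeWith f d e1 e2 (e3 + 1) := by
  have h12 := H.he12
  have h23 := H.he23
  have hde := H.he3
  have hf0 := H.hred.ne_zero
  obtain ⟨p3, hp3⟩ := H.exists_p h3
  obtain ⟨p4, hp4⟩ := H.exists_p h4
  have hall : ∀ k, ∀ x ∈ Ik f ρ1 ρ2 e3 k, ∃ b b' : S4, x = b * p3 + b' * p4 := by
    intro k x hx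
    rw [mem_Ik] at hx
    obtain ⟨ρ, hρ, -, hd⟩ := hx
    obtain ⟨b1, b2, b3, b4, rfl⟩ := hgen ρ hρ
    refine ⟨b3, b4, mul_left_cancel₀ hf0 ?_⟩
    rw [← hd, map_add, map_add, detL_self, map_smul, map_smul, hp3, hp4, smul_eq_mul,
      smul_eq_mul]
    ring
  obtain ⟨m, hm, hom3, hm'⟩ := H.degree_pos hnf h3 hq3 hp3
  obtain ⟨n, hn, hom4, hn'⟩ := H.degree_pos hnf h4 hq4 hp4
  have p30 : p3 ≠ 0 := by
    rintro rfl
    refine H.not_dvd h hn hom4 fun k x hx => ?_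
    obtain ⟨b, b', rfl⟩ := hall k x hx
    exact ⟨b', by ring⟩
  have p40 : p4 ≠ 0 := by
    rintro rfl
    refine H.not_dvd h hm hom3 fun k x hx => ?_
    obtain ⟨b, b', rfl⟩ := hall k x hx
    exact ⟨b, by ring⟩
  have hmn : (m : ℚ) * n ≤ 1 := by
    have := arch_nonneg (x := 1 - (m : ℚ) * n) (N := N)
      (c := (m : ℚ) + n + c - (m : ℚ) * n * (m + n + 4) / 2) (fun j hj => by
        have t1 := H.two_bound hom3 hom4 p30 hall j
        have t2 := h (j + m + n) (by omega)
        have t3 : 0 ≤ ((j + m + n : ℕ) : ℚ) + c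
            - (sQ (j + m + n) + sQ j - sQ (j + n) - sQ (j + m)) := by linarith
        refine t3.trans (le_of_eq ?_)
        simp only [sQ]
        push_cast
        ring)
    linarith
  have hmn' : m * n ≤ 1 := by exact_mod_cast hmn
  obtain ⟨rfl, rfl⟩ : m = 1 ∧ n = 1 := by
    constructor <;> nlinarith
  have hq3e := hm' p30
  have hq4e := hn' p40
  subst hq3e hq4e
  obtain ⟨v3, hv3⟩ := linear_form hom3
  obtain ⟨v4, hv4⟩ := linear_form hom4
  have hspan : v4 ∉ Submodule.span ℂ {v3} := by
    intro hs
    rw [Submodule.mem_span_singleton] at hs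
    obtain ⟨t, ht⟩ := hs
    refine H.not_dvd h le_rfl hom3 fun k x hx => ?_
    obtain ⟨b, b', rfl⟩ := hall k x hx
    refine ⟨b + b' * C t, ?_⟩
    rw [hv4, ← ht, map_smul, ← hv3, smul_eq_C_mul]
    ring
  have hτ : p4 • ρ3 - p3 • ρ4 ∈ AR4 f :=
    (AR4 f).sub_mem ((AR4 f).smul_mem _ h3) ((AR4 f).smul_mem _ h4)
  have hτq : VecHomog (p4 • ρ3 - p3 • ρ4) (e3 + 2) := by
    intro i
    have t1 := hom4.mul (hq3 i)
    have t2 := hom3.mul (hq4 i)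
    rw [show 1 + (1 + e3) = e3 + 2 by omega] at t1 t2
    exact t1.sub t2
  obtain ⟨u, v, hu, hv, huv⟩ := H.ker_det hτ hτq (by omega) (by omega) (by
    rw [map_sub, map_smul, map_smul, hp3, hp4, smul_eq_mul, smul_eq_mul]; ring)
  refine ⟨h12, by omega, by omega, ![ρ1, ρ2, ρ3, ρ4], ![-u, -v, p4, -p3], ?_, H.v1, H.v2,
    ?_, ?_, ?_, ?_, ?_, hom4, hom3.neg, ?_, ?_, ?_⟩
  · intro i
    fin_cases i
    exacts [H.h1, H.h2, h3, h4]
  · rw [add_comm e3 1]; exact hq3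
  · rw [add_comm e3 1]; exact hq4
  · intro σ hσ
    obtain ⟨b1, b2, b3, b4, hb⟩ := hgen σ hσ
    exact ⟨![b1, b2, b3, b4], by simpa [Fin.sum_univ_four] using hb⟩
  · rw [show e3 + 1 - e1 + 1 = e3 + 2 - e1 by omega]; exact hu.neg
  · rw [show e3 + 1 - e2 + 1 = e3 + 2 - e2 by omega]; exact hv.neg
  · intro h0
    exact p40 (congrFun h0 2)
  · have : (-u) • ρ1 + (-v) • ρ2 + p4 • ρ3 + (-p3) • ρ4 = 0 := by
      have : p4 • ρ3 - p3 • ρ4 - (u • ρ1 + v • ρ2) = 0 := sub_eq_zero.2 huv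
      rw [← this]
      module
    simpa [Fin.sum_univ_four] using this
  · intro b hb
    have hb : b 0 • ρ1 + b 1 • ρ2 + b 2 • ρ3 + b 3 • ρ4 = 0 := by
      simpa [Fin.sum_univ_four] using hb
    have hd := congrArg (detL ρ1 ρ2) hb
    rw [map_add, map_add, detL_self, map_smul, map_smul, hp3, hp4, smul_eq_mul,
      smul_eq_mul, map_zero] at hd
    have hd' : b 2 * p3 + b 3 * p4 = 0 := by
      refine mul_left_cancel₀ hf0 ?_
      rw [mul_zero, ← hd]; ring
    obtain ⟨t, ht⟩ := lin_regular1 hspan (t := b 3) (by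
      rw [← hv3, ← hv4]
      exact ⟨-b 2, by linear_combination hd'⟩)
    rw [← hv3] at ht
    have h2 : b 2 = (-t) * p4 := by
      refine mul_right_cancel₀ p30 ?_
      rw [ht] at hd'
      linear_combination hd'
    have hr : (b 0 + -t * u) • ρ1 + (b 1 + -t * v) • ρ2 = 0 := by
      have e : (-t) • (p4 • ρ3 - p3 • ρ4) = (-t) • (u • ρ1 + v • ρ2) := by rw [huv]
      rw [← hb, h2, ht]
      have e' : (-t * p4) • ρ3 + (p3 * t) • ρ4 = (-t) • (u • ρ1 + v • ρ2) := by
        rw [← e]; module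
      rw [add_assoc (_ + _), e']
      module
    obtain ⟨r0, r1⟩ := H.indep _ _ hr
    refine ⟨-t, ?_⟩
    ext1 i
    fin_cases i
    · change b 0 = -t * -u
      linear_combination r0
    · change b 1 = -t * -v
      linear_combination r1
    · exact h2
    · change b 3 = -t * -p3
      rw [ht]; ring

end Setup

/-- **Corollary 5.3.** For a tame non-free surface with `e3 ≥ e2` and one-dimensional
singular locus, `deg Σ ≤ s₁² - s₂ - 1`; equality holds if `D` is nearly free with exponents
`e1, e2, e3 + 1`, and conversely equality together with `AR(f)` being generated by `ρ1, ρ2`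
and two further homogeneous syzygies implies near freeness with those exponents. -/
theorem cor_5_3 (f : S4) (d e1 e2 e3 : ℕ) (ρ1 ρ2 : Fin 4 → S4)
    (hd : 1 ≤ d) (hf : f.IsHomogeneous d) (hred : Squarefree f)
    (hmin : MinimalPair f ρ1 ρ2 e1 e2) (htame : TamePair f ρ1 ρ2)
    (he3 : e1 + e2 + e3 + 1 = d) (he23 : e2 ≤ e3)
    (hnotfree : ¬ ∃ d1 d2 d3 : ℕ, IsFreeWith f d1 d2 d3)
    (a b : ℤ) (hHilb : ∃ N : ℕ, ∀ k : ℕ, N ≤ k → (milnor4 f k : ℤ) = a * k + b) :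
    a ≤ ((e1 : ℤ) + e2 + e3) ^ 2 - ((e1 : ℤ) * e2 + (e1 : ℤ) * e3 + (e2 : ℤ) * e3) - 1 ∧
    (IsNearlyFreeWith f d e1 e2 (e3 + 1) →
      a = ((e1 : ℤ) + e2 + e3) ^ 2 - ((e1 : ℤ) * e2 + (e1 : ℤ) * e3 + (e2 : ℤ) * e3) - 1) ∧
    ((a = ((e1 : ℤ) + e2 + e3) ^ 2 - ((e1 : ℤ) * e2 + (e1 : ℤ) * e3 + (e2 : ℤ) * e3) - 1 ∧
      ∃ (ρ3 ρ4 : Fin 4 → S4) (q3 q4 : ℕ),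
        ρ3 ∈ AR4 f ∧ ρ4 ∈ AR4 f ∧ VecHomog ρ3 q3 ∧ VecHomog ρ4 q4 ∧
        ∀ ρ ∈ AR4 f, ∃ b1 b2 b3 b4 : S4,
          ρ = b1 • ρ1 + b2 • ρ2 + b3 • ρ3 + b4 • ρ4) →
      IsNearlyFreeWith f d e1 e2 (e3 + 1)) := by
  have H : Setup f d e1 e2 e3 ρ1 ρ2 := ⟨hd, hf, hred, hmin, htame, he3, he23⟩
  have h1 : (1 : S4) ∉ Setup.II f ρ1 ρ2 := fun h => hnotfree ⟨e1, e2, e3, H.free_of_one h⟩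
  obtain ⟨c, N, hc⟩ := H.defect a b hHilb
  refine ⟨?_, ?_, ?_⟩
  · have := H.part1 h1 hc
    linarith
  · intro hnf
    have := H.part2 hnf hc
    linarith
  · rintro ⟨ha, ρ3, ρ4, q3, q4, h3, h4, hq3, hq4, hgen⟩
    refine H.part3 h1 (c := c) (N := N) (fun k hk => ?_) h3 h4 hq3 hq4 hgen
    rw [hc k hk, ha]
    push_cast
    ring
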